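/- For all convex bodies K, L in R^m (m ≥ 2), the Kneser–Süss inequality holds: Vol(K # L)^{(m−1)/m} ≥ Vol(K)^{(m−1)/m} + Vol(L)^{(m−1)/m}, with equality if and only if K and L are homothetic. -/

import Mathlib

open MeasureTheory Set
open scoped ENNReal Pointwise RealInnerProductSpace Topology

noncomputable section

abbrev Euc (m : ℕ) : Type := EuclideanSpace ℝ (Fin m)

/-- A convex body: compact convex set with nonempty interior. -/
def IsConvexBody {m : ℕ} (K : Set (Euc m)) : Prop :=
  Convex ℝ K ∧ IsCompact K ∧ (interior K).Nonempty

/-- A (compact convex) polytope: convex hull of a finite set. -/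
def IsPolytope {m : ℕ} (P : Set (Euc m)) : Prop :=
  ∃ s : Finset (Euc m), P = convexHull ℝ (s : Set (Euc m))

def unitSphere (m : ℕ) : Set (Euc m) := Metric.sphere 0 1

/-- `n` is an outward unit normal to `K` at the boundary point `x`. -/
def IsOutwardNormalAt {m : ℕ} (K : Set (Euc m)) (x n : Euc m) : Prop :=
  x ∈ frontier K ∧ ‖n‖ = 1 ∧ ∀ y ∈ K, ⟪y - x, n⟫ ≤ 0

open Classical in
/-- The (set-valued choice of) Gauss map of `K`. -/
def gaussMap {m : ℕ} (K : Set (Euc m)) (x : Euc m) : Euc m :=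
  if h : ∃ n, IsOutwardNormalAt K x n then h.choose else 0

/-- The surface area measure of `K`: the pushforward under the Gauss map of the
`(m-1)`-dimensional Hausdorff measure on the boundary of `K`. -/
def surfMeasure {m : ℕ} (K : Set (Euc m)) : Measure (Euc m) :=
  Measure.map (gaussMap K) (μH[(m : ℝ) - 1].restrict (frontier K))

/-- The face of `P` in direction `n`. -/
def faceIn {m : ℕ} (P : Set (Euc m)) (n : Euc m) : Set (Euc m) :=
  {x ∈ P | ∀ y ∈ P, ⟪y, n⟫ ≤ ⟪x, n⟫}

/-- The `(m-1)`-dimensional volume of the face of `P` in direction `n`. -/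
def faceArea {m : ℕ} (P : Set (Euc m)) (n : Euc m) : ℝ≥0∞ :=
  μH[(m : ℝ) - 1] (faceIn P n)

/-- `n` is the outward unit normal to a facet ((m-1)-dimensional face) of `P`. -/
def IsFacetNormal {m : ℕ} (P : Set (Euc m)) (n : Euc m) : Prop :=
  ‖n‖ = 1 ∧ 0 < faceArea P n

/-!
Write `r(K) = Vol(K)^(1/m)` and `V(K, L) = m⁻¹ ∫ h_L dS(K, ·)`. For the Blaschke sum `M` of `K` and
`L`, additivity of the surface area measures and Minkowski's first inequality
`V(K, L) ≥ r(K)^(m-1) r(L)` give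
`r(M)^m = V(M, M) = V(K, M) + V(L, M) ≥ (r(K)^(m-1) + r(L)^(m-1)) r(M)`,
and equality holds exactly when `K` and `L` are both homothetic to `M`.

Minkowski's inequality is a first-order form of the Brunn–Minkowski inequality. The latter is
proved by induction on the dimension, matching the slices of the two bodies through the quantile
functions of their first coordinates. In the case of equality these functions differ by a constant,
so that after a translation the bodies have the same extent in every direction.

The surface area measure enters through the gauge `g` of `K`. At almost every boundary point `g` is
differentiable, its gradient is a positive multiple of the outer normal, and
`∫_K h_L(∇g) dx = V(K, L)`, because the projection of `(‖∇g‖ dx)|_K` from the origin to the boundary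
of `K` is `m⁻¹` times the surface measure. The two measures are compared on small pieces of the
boundary on which the projection to a tangent hyperplane nearly preserves distances.
-/

/-! ### The Brunn–Minkowski inequality -/

section Real

lemma eqOn_of_le_of_setLIntegral_le {X : Type*} [TopologicalSpace X] [MeasurableSpace X]
    [OpensMeasurableSpace X] {μ : Measure X} [μ.IsOpenPosMeasure] {U : Set X} (hU : IsOpen U)
    {f g : X → ℝ≥0∞} (hf : ContinuousOn f U) (hg : ContinuousOn g U) (hfg : ∀ x ∈ U, f x ≤ g x)
    (hfin : ∫⁻ x in U, f x ∂μ ≠ ∞) (hle : ∫⁻ x in U, g x ∂μ ≤ ∫⁻ x in U, f x ∂μ) :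
    EqOn f g U := by
  have hae : ∀ᵐ x ∂μ.restrict U, f x ≤ g x := (ae_restrict_mem hU.measurableSet).mono hfg
  exact Measure.eqOn_open_of_ae_eq (ae_eq_of_ae_le_of_lintegral_le hae hfin
    (hg.aemeasurable hU.measurableSet) hle) hU hf hg

lemma exists_strictMonoOn_hasDerivAt_inv {F f : ℝ → ℝ} {a b : ℝ} (hab : a < b)
    (hF : ContinuousOn F (Icc a b)) (hd : ∀ t ∈ Ioo a b, HasDerivAt F (f t) t)
    (hf : ∀ t ∈ Ioo a b, 0 < f t) :
    ∃ z : ℝ → ℝ, StrictMonoOn z (Ioo (F a) (F b)) ∧ z '' Ioo (F a) (F b) = Ioo a b ∧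
      ∀ τ ∈ Ioo (F a) (F b), HasDerivAt z (f (z τ))⁻¹ τ := by
  have hmono : StrictMonoOn F (Icc a b) := by
    refine strictMonoOn_of_deriv_pos (convex_Icc a b) hF fun t ht ↦ ?_
    rw [interior_Icc] at ht
    exact (hd t ht).deriv ▸ hf t ht
  have hmapsTo : MapsTo F (Ioo a b) (Ioo (F a) (F b)) := fun t ht ↦
    ⟨hmono (left_mem_Icc.2 hab.le) (Ioo_subset_Icc_self ht) ht.1,
      hmono (Ioo_subset_Icc_self ht) (right_mem_Icc.2 hab.le) ht.2⟩
  have hmono' : StrictMonoOn F (Ioo a b) := hmono.mono Ioo_subset_Icc_self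
  have hbij : BijOn F (Ioo a b) (Ioo (F a) (F b)) :=
    ⟨hmapsTo, hmono'.injOn, intermediate_value_Ioo hab.le hF⟩
  have hinv := hbij.invOn_invFunOn
  set z := Function.invFunOn F (Ioo a b)
  have hbij' : BijOn z (Ioo (F a) (F b)) (Ioo a b) := hbij.symm hinv.symm
  have hz : StrictMonoOn z (Ioo (F a) (F b)) := fun σ hσ τ hτ hlt ↦ by
    rwa [← hmono'.lt_iff_lt (hbij'.mapsTo hσ) (hbij'.mapsTo hτ), hinv.2 hσ, hinv.2 hτ]
  refine ⟨z, hz, hbij'.image_eq, fun τ hτ ↦ ?_⟩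
  have hcont : ContinuousAt z τ :=
    continuousAt_of_monotoneOn_of_image_mem_nhds hz.monotoneOn (isOpen_Ioo.mem_nhds hτ)
      (hbij'.image_eq ▸ isOpen_Ioo.mem_nhds (hbij'.mapsTo hτ))
  exact (hd _ (hbij'.mapsTo hτ)).of_local_left_inverse hcont (hf _ (hbij'.mapsTo hτ)).ne'
    (Filter.eventually_of_mem (isOpen_Ioo.mem_nhds hτ) hinv.2)

lemma exists_quantile_of_continuousOn {f : ℝ → ℝ} {a b : ℝ} (hab : a < b)
    (hf : ContinuousOn f (Ioo a b)) (hpos : ∀ t ∈ Ioo a b, 0 < f t)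
    (hint : IntegrableOn f (Ioo a b)) :
    ∃ z : ℝ → ℝ, StrictMonoOn z (Ioo 0 1) ∧ z '' Ioo 0 1 = Ioo a b ∧
      ∀ τ ∈ Ioo (0 : ℝ) 1, HasDerivAt z ((∫ t in Ioo a b, f t) / f (z τ)) τ := by
  have hint' : IntervalIntegrable f volume a b :=
    (intervalIntegrable_iff_integrableOn_Ioo_of_le hab.le).2 hint
  have hV : ∫ t in Ioo a b, f t = ∫ t in a..b, f t := by
    rw [intervalIntegral.integral_of_le hab.le, integral_Ioc_eq_integral_Ioo]
  rw [hV]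
  set V := ∫ t in a..b, f t
  have hVpos : 0 < V := intervalIntegral.intervalIntegral_pos_of_pos_on hint' hpos hab
  have hcont : ContinuousOn (fun t ↦ (∫ x in a..t, f x) / V) (Icc a b) := by
    rw [← uIcc_of_le hab.le]
    refine (intervalIntegral.continuousOn_primitive_interval ?_).div_const V
    rwa [uIcc_of_le hab.le, integrableOn_Icc_iff_integrableOn_Ioo]
  have hderiv : ∀ t ∈ Ioo a b, HasDerivAt (fun t ↦ (∫ x in a..t, f x) / V) (f t / V) t := by
    refine fun t ht ↦ HasDerivAt.div_const ?_ V
    have hsub : uIcc a t ⊆ uIcc a b := by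
      rw [uIcc_of_le ht.1.le, uIcc_of_le hab.le]
      exact Icc_subset_Icc_right ht.2.le
    exact intervalIntegral.integral_hasDerivAt_right (hint'.mono_set hsub)
      (hf.stronglyMeasurableAtFilter isOpen_Ioo t ht) (hf.continuousAt (isOpen_Ioo.mem_nhds ht))
  simpa only [intervalIntegral.integral_same, zero_div, inv_div, V, div_self hVpos.ne'] using
    exists_strictMonoOn_hasDerivAt_inv hab hcont hderiv fun t ht ↦ div_pos (hpos t ht) hVpos

lemma rpow_mul_rpow_le_mul_rpow_mul_rpow {s t a b x y : ℝ} (hs : 0 ≤ s) (ht : 0 ≤ t)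
    (hst : s + t = 1) (ha : 0 ≤ a) (hb : 0 ≤ b) (hx : 0 < x) (hy : 0 < y) :
    a ^ s * b ^ t ≤ (s * (a / x) + t * (b / y)) * (x ^ s * y ^ t) :=
  calc a ^ s * b ^ t = ((a / x) ^ s * (b / y) ^ t) * (x ^ s * y ^ t) := by
        rw [Real.div_rpow ha hx.le, Real.div_rpow hb hy.le]
        field_simp
    _ ≤ _ := by
        gcongr
        exact Real.geom_mean_le_arith_mean2_weighted hs ht (by positivity) (by positivity) hst

lemma eq_of_mul_rpow_mul_rpow_eq {s t V x y : ℝ} (hs : 0 < s) (ht : 0 < t) (hst : s + t = 1)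
    (hV : 0 < V) (hx : 0 < x) (hy : 0 < y)
    (h : (s * (V / x) + t * (V / y)) * (x ^ s * y ^ t) = V) : x = y := by
  have hgeom : (V / x) ^ s * (V / y) ^ t = V / (x ^ s * y ^ t) := by
    rw [Real.div_rpow hV.le hx.le, Real.div_rpow hV.le hy.le, div_mul_div_comm,
      ← Real.rpow_add hV, hst, Real.rpow_one]
  have hamgm : (V / x) ^ s * (V / y) ^ t = s * (V / x) + t * (V / y) := by
    rw [hgeom, div_eq_iff (by positivity), h]
  have hVxy := (Real.geom_mean_eq_arith_mean_weighted_iff_of_pos Finset.univ ![s, t]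
    ![V / x, V / y] (by simp [Fin.forall_fin_two, hs, ht]) (by simpa using hst)
    (by simp only [Fin.forall_fin_two, Finset.mem_univ, forall_const, Matrix.cons_val_zero,
          Matrix.cons_val_one]
        constructor <;> positivity)).1 (by simpa using hamgm) 0 (by simp) 1 (by simp)
  exact inv_injective (mul_left_cancel₀ hV.ne' hVxy)

lemma eqOn_of_setLIntegral_mul_rpow_mul_rpow_le {X : Type*} [TopologicalSpace X]
    [MeasurableSpace X] [OpensMeasurableSpace X] {μ : Measure X} [μ.IsOpenPosMeasure] {U : Set X}
    (hU : IsOpen U) (hμU : μ U = 1) {f g : X → ℝ} {s t V : ℝ} (hs : 0 < s) (ht : 0 < t)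
    (hst : s + t = 1) (hV : 0 < V) (hfc : ContinuousOn f U) (hgc : ContinuousOn g U)
    (hf : ∀ x ∈ U, 0 < f x) (hg : ∀ x ∈ U, 0 < g x)
    (hle : ∫⁻ x in U, ENNReal.ofReal
      ((s * (V / f x) + t * (V / g x)) * (f x ^ s * g x ^ t)) ∂μ ≤ ENNReal.ofReal V) :
    EqOn f g U := by
  set q : X → ℝ := fun x ↦ (s * (V / f x) + t * (V / g x)) * (f x ^ s * g x ^ t)
  have hqc : ContinuousOn q U :=
    ((continuousOn_const.mul (continuousOn_const.div hfc fun x hx ↦ (hf x hx).ne')).add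
      (continuousOn_const.mul (continuousOn_const.div hgc fun x hx ↦ (hg x hx).ne'))).mul
      ((hfc.rpow_const fun x _ ↦ .inr hs.le).mul (hgc.rpow_const fun x _ ↦ .inr ht.le))
  have hVq : ∀ x ∈ U, V ≤ q x := fun x hx ↦ by
    have := rpow_mul_rpow_le_mul_rpow_mul_rpow hs.le ht.le hst hV.le hV.le (hf x hx) (hg x hx)
    rwa [← Real.rpow_add hV, hst, Real.rpow_one] at this
  have heq : EqOn (fun _ ↦ ENNReal.ofReal V) (fun x ↦ ENNReal.ofReal (q x)) U :=
    eqOn_of_le_of_setLIntegral_le (μ := μ) hU continuousOn_const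
      (ENNReal.continuous_ofReal.comp_continuousOn hqc)
      (fun x hx ↦ ENNReal.ofReal_le_ofReal (hVq x hx)) (by simp [hμU]) (by simpa [hμU] using hle)
  exact fun x hx ↦ eq_of_mul_rpow_mul_rpow_eq hs ht hst hV (hf x hx) (hg x hx)
    ((ENNReal.ofReal_eq_ofReal_iff hV.le (hV.le.trans (hVq x hx))).1 (heq hx)).symm

end Real

section OpenBody

lemma smul_set_vadd {R M : Type*} [AddMonoid M] [DistribSMul R M] (r : R) (v : M) (A : Set M) :
    r • (v +ᵥ A) = (r • v) +ᵥ (r • A) := by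
  simp only [← image_smul, ← image_vadd, image_image, vadd_eq_add, smul_add]

/-- A nonempty bounded open convex set. The Brunn–Minkowski theory is developed for these, since
their slices and linear images are of the same kind. -/
structure IsOpenBody {E : Type*} [NormedAddCommGroup E] [NormedSpace ℝ E] (A : Set E) : Prop where
  isOpen : IsOpen A
  convex : Convex ℝ A
  isBounded : Bornology.IsBounded A
  nonempty : A.Nonempty

namespace IsOpenBody
variable {E F : Type*} [NormedAddCommGroup E] [NormedSpace ℝ E] [NormedAddCommGroup F]
  [NormedSpace ℝ F]

lemma smul {A : Set E} (hA : IsOpenBody A) {c : ℝ} (hc : c ≠ 0) : IsOpenBody (c • A) :=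
  ⟨hA.isOpen.smul₀ hc, hA.convex.smul c, hA.isBounded.smul₀ c, hA.nonempty.smul_set⟩

lemma vadd {A : Set E} (hA : IsOpenBody A) (v : E) : IsOpenBody (v +ᵥ A) :=
  ⟨hA.isOpen.vadd v, hA.convex.vadd v, hA.isBounded.vadd v, hA.nonempty.vadd_set⟩

lemma add {A B : Set E} (hA : IsOpenBody A) (hB : IsOpenBody B) : IsOpenBody (A + B) :=
  ⟨hA.isOpen.add_right, hA.convex.add hB.convex, hA.isBounded.add hB.isBounded,
    hA.nonempty.add hB.nonempty⟩

lemma image_equiv {A : Set E} (hA : IsOpenBody A) (e : E ≃L[ℝ] F) : IsOpenBody (e '' A) :=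
  ⟨e.toHomeomorph.isOpenMap _ hA.isOpen, hA.convex.linear_image e.toLinearEquiv.toLinearMap,
    e.lipschitz.isBounded_image hA.isBounded, hA.nonempty.image _⟩

lemma image_fst {A : Set (E × F)} (hA : IsOpenBody A) : IsOpenBody (Prod.fst '' A) :=
  ⟨isOpenMap_fst _ hA.isOpen, hA.convex.linear_image (LinearMap.fst ℝ E F),
    LipschitzWith.prod_fst.isBounded_image hA.isBounded, hA.nonempty.image _⟩

lemma exists_eq_Ioo {J : Set ℝ} (hJ : IsOpenBody J) : ∃ a b, a < b ∧ J = Ioo a b := by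
  have hconn : IsConnected J := ⟨hJ.nonempty, hJ.convex.isPreconnected⟩
  have hsub : J ⊆ Ioo (sInf J) (sSup J) := by
    rw [← interior_Icc]
    exact hJ.isOpen.subset_interior_iff.2 fun x hx ↦
      ⟨csInf_le hJ.isBounded.bddBelow hx, le_csSup hJ.isBounded.bddAbove hx⟩
  obtain ⟨x, hx⟩ := hJ.nonempty
  exact ⟨sInf J, sSup J, (hsub hx).1.trans (hsub hx).2,
    hsub.antisymm (hconn.Ioo_csInf_csSup_subset hJ.isBounded.bddBelow hJ.isBounded.bddAbove)⟩

lemma measure_ne_top {A : Set E} (hA : IsOpenBody A) [ProperSpace E] [MeasurableSpace E]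
    (μ : Measure E) [IsFiniteMeasureOnCompacts μ] : μ A ≠ ∞ :=
  hA.isBounded.measure_lt_top.ne

lemma measureReal_pos {A : Set E} (hA : IsOpenBody A) [ProperSpace E] [MeasurableSpace E]
    (μ : Measure E) [IsFiniteMeasureOnCompacts μ] [μ.IsOpenPosMeasure] : 0 < μ.real A :=
  ENNReal.toReal_pos (hA.isOpen.measure_pos μ hA.nonempty).ne' (hA.measure_ne_top μ)

lemma integrableOn {A : Set E} (hA : IsOpenBody A) [ProperSpace E] [MeasurableSpace E]
    [BorelSpace E] (μ : Measure E) [IsFiniteMeasureOnCompacts μ] {G : Type*}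
    [NormedAddCommGroup G] {f : E → G} (hf : Continuous f) : IntegrableOn f A μ :=
  (hf.continuousOn.integrableOn_compact hA.isBounded.isCompact_closure).mono_set subset_closure

end IsOpenBody

end OpenBody

section Slice
variable {E F : Type*} [NormedAddCommGroup E] [NormedSpace ℝ E] [NormedAddCommGroup F]
  [NormedSpace ℝ F]

lemma preimage_mk_nonempty_iff {α β : Type*} {A : Set (α × β)} {t : α} :
    (Prod.mk t ⁻¹' A).Nonempty ↔ t ∈ Prod.fst '' A := by
  simp [Set.Nonempty]

lemma IsOpenBody.preimage_mk {A : Set (E × F)} (hA : IsOpenBody A) {t : E}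
    (ht : t ∈ Prod.fst '' A) : IsOpenBody (Prod.mk t ⁻¹' A) where
  isOpen := hA.isOpen.preimage (by fun_prop)
  convex := fun x hx y hy a b ha hb hab ↦ by
    have := hA.convex hx hy ha hb hab
    rwa [Prod.smul_mk, Prod.smul_mk, Prod.mk_add_mk, ← add_smul, hab, one_smul] at this
  isBounded := (LipschitzWith.prod_snd.isBounded_image hA.isBounded).subset
    fun x hx ↦ ⟨(t, x), hx, rfl⟩
  nonempty := preimage_mk_nonempty_iff.2 ht

lemma smul_preimage_mk_add_subset (A B : Set (E × F)) (s t : ℝ) (x y : E) :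
    s • Prod.mk x ⁻¹' A + t • Prod.mk y ⁻¹' B ⊆ Prod.mk (s • x + t • y) ⁻¹' (s • A + t • B) := by
  rintro _ ⟨_, ⟨u, hu, rfl⟩, _, ⟨v, hv, rfl⟩, rfl⟩
  exact ⟨_, smul_mem_smul_set hu, _, smul_mem_smul_set hv, rfl⟩

variable [FiniteDimensional ℝ E] [MeasurableSpace E] [BorelSpace E] [FiniteDimensional ℝ F]
  [MeasurableSpace F] [BorelSpace F]

lemma IsOpenBody.integrableOn_measureReal_preimage_mk {A : Set (E × F)} (hA : IsOpenBody A)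
    (μ : Measure E) [IsLocallyFiniteMeasure μ] (ν : Measure F) [IsLocallyFiniteMeasure ν]
    (S : Set E) : IntegrableOn (fun t ↦ ν.real (Prod.mk t ⁻¹' A)) S μ :=
  (Measure.integrable_measure_prodMk_left hA.isOpen.measurableSet
    (hA.measure_ne_top (μ.prod ν))).integrableOn

lemma IsOpenBody.setIntegral_comp_fst {A : Set (E × F)} (hA : IsOpenBody A)
    (μ : Measure E) [IsLocallyFiniteMeasure μ] (ν : Measure F) [IsLocallyFiniteMeasure ν]
    {g : E → ℝ} (hg : Continuous g) :
    ∫ p in A, g p.1 ∂μ.prod ν = ∫ t in Prod.fst '' A, ν.real (Prod.mk t ⁻¹' A) * g t ∂μ := by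
  have hmeas := hA.isOpen.measurableSet
  have hslice : ∀ t, ∫ y, A.indicator (fun p ↦ g p.1) (t, y) ∂ν =
      ν.real (Prod.mk t ⁻¹' A) * g t := fun t ↦ by
    calc _ = ∫ y, (Prod.mk t ⁻¹' A).indicator (fun _ ↦ g t) y ∂ν := rfl
      _ = _ := by
        rw [integral_indicator (measurable_prodMk_left hmeas), setIntegral_const, smul_eq_mul]
  have hint : Integrable (A.indicator fun p ↦ g p.1) (μ.prod ν) :=
    (hA.integrableOn _ (hg.comp continuous_fst)).integrable_indicator hmeas
  rw [← integral_indicator hmeas, integral_prod _ hint]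
  simp_rw [hslice]
  refine (setIntegral_eq_integral_of_forall_compl_eq_zero fun t ht ↦ ?_).symm
  rw [← preimage_mk_nonempty_iff, not_nonempty_iff_eq_empty] at ht
  rw [ht, measureReal_empty, zero_mul]

end Slice

section LogConcave
variable {E : Type*} [NormedAddCommGroup E] [NormedSpace ℝ E] [MeasurableSpace E]

/-- Log-concavity of a measure, tested on open bodies. For Haar measure this is the multiplicative,
dimension-free form of the Brunn–Minkowski inequality. -/
def IsLogConcave (μ : Measure E) : Prop :=
  ∀ ⦃A B : Set E⦄, IsOpenBody A → IsOpenBody B → ∀ ⦃s t : ℝ⦄, 0 < s → 0 < t → s + t = 1 →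
    μ.real A ^ s * μ.real B ^ t ≤ μ.real (s • A + t • B)

lemma isLogConcave_of_subsingleton [Subsingleton E] (μ : Measure E) : IsLogConcave μ := by
  intro A B hA hB s t _ _ hst
  rw [Subsingleton.eq_univ_of_nonempty hA.nonempty, Subsingleton.eq_univ_of_nonempty hB.nonempty,
    Subsingleton.eq_univ_of_nonempty ((univ_nonempty.smul_set).add univ_nonempty.smul_set),
    ← Real.rpow_add' measureReal_nonneg (by simp [hst]), hst, Real.rpow_one]

lemma IsLogConcave.of_measurePreserving {F : Type*} [NormedAddCommGroup F] [NormedSpace ℝ F]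
    [MeasurableSpace F] [OpensMeasurableSpace F] {μ : Measure E} {ν : Measure F}
    (hν : IsLogConcave ν) (e : E ≃L[ℝ] F) (he : MeasurePreserving e μ ν) : IsLogConcave μ := by
  have hreal : ∀ {S : Set E}, IsOpenBody S → μ.real S = ν.real (e '' S) := fun {S} hS ↦ by
    rw [← he.measureReal_preimage (hS.image_equiv e).isOpen.measurableSet.nullMeasurableSet,
      preimage_image_eq _ e.injective]
  intro A B hA hB s t hs ht hst
  rw [hreal hA, hreal hB, hreal ((hA.smul hs.ne').add (hB.smul ht.ne')), image_add,
    image_smul_set, image_smul_set]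
  exact hν (hA.image_equiv e) (hB.image_equiv e) hs ht hst

end LogConcave

section Product
variable {F : Type*} [MeasurableSpace F]

/-- `z` is the quantile function of the first coordinate under the uniform distribution on `A`:
the `volume.prod ν`-proportion of `A` lying over `(-∞, z τ)` is `τ`. This is encoded by the
derivative of `z` and its range. -/
structure IsQuantile (ν : Measure F) (A : Set (ℝ × F)) (z : ℝ → ℝ) : Prop where
  strictMonoOn : StrictMonoOn z (Ioo 0 1)
  image_eq : z '' Ioo 0 1 = Prod.fst '' A
  hasDerivAt : ∀ τ ∈ Ioo (0 : ℝ) 1, HasDerivAt z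
    (((volume : Measure ℝ).prod ν).real A / ν.real (Prod.mk (z τ) ⁻¹' A)) τ

variable {ν : Measure F} {A B : Set (ℝ × F)} {z w : ℝ → ℝ} {s t : ℝ}

namespace IsQuantile

lemma mem_image_fst (hz : IsQuantile ν A z) {τ : ℝ} (hτ : τ ∈ Ioo 0 1) : z τ ∈ Prod.fst '' A :=
  hz.image_eq ▸ mem_image_of_mem z hτ

lemma continuousOn (hz : IsQuantile ν A z) : ContinuousOn z (Ioo 0 1) :=
  fun τ hτ ↦ (hz.hasDerivAt τ hτ).continuousAt.continuousWithinAt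

end IsQuantile

variable [NormedAddCommGroup F] [NormedSpace ℝ F] [FiniteDimensional ℝ F] [BorelSpace F]
  [IsLocallyFiniteMeasure ν]

lemma IsLogConcave.rpow_mul_rpow_le_slice (hν : IsLogConcave ν) (hA : IsOpenBody A)
    (hB : IsOpenBody B) (hs : 0 < s) (ht : 0 < t) (hst : s + t = 1) {x y : ℝ}
    (hx : x ∈ Prod.fst '' A) (hy : y ∈ Prod.fst '' B) :
    ν.real (Prod.mk x ⁻¹' A) ^ s * ν.real (Prod.mk y ⁻¹' B) ^ t ≤
      ν.real (Prod.mk (s * x + t * y) ⁻¹' (s • A + t • B)) := by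
  have hsub := smul_preimage_mk_add_subset A B s t x y
  refine (hν (hA.preimage_mk hx) (hB.preimage_mk hy) hs ht hst).trans (measureReal_mono hsub ?_)
  have hne := ((((hA.preimage_mk hx).smul hs.ne').add
    ((hB.preimage_mk hy).smul ht.ne')).nonempty).mono hsub
  exact (((hA.smul hs.ne').add (hB.smul ht.ne')).preimage_mk
    (preimage_mk_nonempty_iff.1 hne)).measure_ne_top ν

/-- Integrate the slice inequality over the image of the curve `τ ↦ s * z τ + t * w τ`. -/
lemma IsLogConcave.setLIntegral_quantile_le (hν : IsLogConcave ν) (hA : IsOpenBody A)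
    (hB : IsOpenBody B) (hs : 0 < s) (ht : 0 < t) (hst : s + t = 1) (hz : IsQuantile ν A z)
    (hw : IsQuantile ν B w) :
    ∫⁻ τ in Ioo (0 : ℝ) 1, ENNReal.ofReal
      ((s * (((volume : Measure ℝ).prod ν).real A / ν.real (Prod.mk (z τ) ⁻¹' A)) +
        t * (((volume : Measure ℝ).prod ν).real B / ν.real (Prod.mk (w τ) ⁻¹' B))) *
        (ν.real (Prod.mk (z τ) ⁻¹' A) ^ s * ν.real (Prod.mk (w τ) ⁻¹' B) ^ t)) ≤
      ((volume : Measure ℝ).prod ν) (s • A + t • B) := by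
  have hC := (hA.smul hs.ne').add (hB.smul ht.ne')
  have hinj : InjOn (fun τ ↦ s * z τ + t * w τ) (Ioo 0 1) := by
    refine StrictMonoOn.injOn fun x hx y hy hxy ↦ ?_
    have hzxy := hz.strictMonoOn hx hy hxy
    have hwxy := hw.strictMonoOn hx hy hxy
    gcongr
  rw [Measure.prod_apply hC.isOpen.measurableSet]
  refine le_trans ?_ (setLIntegral_le_lintegral ((fun τ ↦ s * z τ + t * w τ) '' Ioo 0 1) _)
  rw [lintegral_image_eq_lintegral_abs_deriv_mul measurableSet_Ioo (fun τ hτ ↦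
    HasDerivAt.hasDerivWithinAt (f := fun τ ↦ s * z τ + t * w τ)
      (((hz.hasDerivAt τ hτ).const_mul s).add ((hw.hasDerivAt τ hτ).const_mul t))) hinj]
  refine setLIntegral_mono' measurableSet_Ioo fun τ hτ ↦ ?_
  rw [ENNReal.ofReal_mul (by positivity), abs_of_nonneg (by positivity)]
  gcongr
  exact (ENNReal.ofReal_le_ofReal (hν.rpow_mul_rpow_le_slice hA hB hs ht hst
    (hz.mem_image_fst hτ) (hw.mem_image_fst hτ))).trans ENNReal.ofReal_toReal_le

variable [ν.IsOpenPosMeasure]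

lemma IsQuantile.measureReal_slice_pos (hz : IsQuantile ν A z) (hA : IsOpenBody A) {τ : ℝ}
    (hτ : τ ∈ Ioo 0 1) : 0 < ν.real (Prod.mk (z τ) ⁻¹' A) :=
  (hA.preimage_mk (hz.mem_image_fst hτ)).measureReal_pos ν

lemma IsQuantile.integral_fst (hz : IsQuantile ν A z) (hA : IsOpenBody A) :
    ∫ p in A, p.1 ∂(volume : Measure ℝ).prod ν =
      ((volume : Measure ℝ).prod ν).real A * ∫ τ in Ioo 0 1, z τ := by
  rw [hA.setIntegral_comp_fst volume ν (g := fun t ↦ t) continuous_id, ← hz.image_eq,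
    integral_image_eq_integral_abs_deriv_smul measurableSet_Ioo
      (fun τ hτ ↦ (hz.hasDerivAt τ hτ).hasDerivWithinAt) hz.strictMonoOn.injOn,
    ← integral_const_mul]
  refine setIntegral_congr_fun measurableSet_Ioo fun τ hτ ↦ ?_
  have hpos := hz.measureReal_slice_pos hA hτ
  rw [smul_eq_mul, abs_of_nonneg (by positivity), ← mul_assoc, div_mul_cancel₀ _ hpos.ne']

namespace IsLogConcave

/-- On the interval `Prod.fst '' A` the logarithm of the slice measure is concave. -/
lemma continuousOn_slice (hν : IsLogConcave ν) (hA : IsOpenBody A) :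
    ContinuousOn (fun t ↦ ν.real (Prod.mk t ⁻¹' A)) (Prod.fst '' A) := by
  have hpos : ∀ t ∈ Prod.fst '' A, 0 < ν.real (Prod.mk t ⁻¹' A) := fun t ht ↦
    (hA.preimage_mk ht).measureReal_pos ν
  have hconc : ConcaveOn ℝ (Prod.fst '' A) fun t ↦ Real.log (ν.real (Prod.mk t ⁻¹' A)) := by
    refine concaveOn_iff_forall_pos.2 ⟨hA.image_fst.convex, fun x hx y hy s t hs ht hst ↦ ?_⟩
    have hx' := hpos x hx
    have hy' := hpos y hy
    have hle := hν.rpow_mul_rpow_le_slice hA hA hs ht hst hx hy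
    rw [← hA.convex.add_smul hs.le ht.le, hst, one_smul] at hle
    have hlog := Real.log_le_log (by positivity) hle
    rwa [Real.log_mul (by positivity) (by positivity), Real.log_rpow hx',
      Real.log_rpow hy'] at hlog
  exact (hconc.continuousOn hA.image_fst.isOpen).rexp.congr fun t ht ↦
    (Real.exp_log (hpos t ht)).symm

lemma exists_isQuantile (hν : IsLogConcave ν) (hA : IsOpenBody A) : ∃ z, IsQuantile ν A z := by
  obtain ⟨a, b, hab, hJ⟩ := hA.image_fst.exists_eq_Ioo
  have hvol : ∫ t in Ioo a b, ν.real (Prod.mk t ⁻¹' A) =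
      ((volume : Measure ℝ).prod ν).real A := by
    simpa [hJ] using (hA.setIntegral_comp_fst volume ν (continuous_const (y := (1 : ℝ)))).symm
  obtain ⟨z, hmono, himg, hd⟩ := exists_quantile_of_continuousOn hab (hJ ▸ hν.continuousOn_slice hA)
    (fun t ht ↦ (hA.preimage_mk (hJ ▸ ht)).measureReal_pos ν)
    (hA.integrableOn_measureReal_preimage_mk volume ν _)
  exact ⟨z, hmono, himg.trans hJ.symm, hvol ▸ hd⟩

theorem volume_prod (hν : IsLogConcave ν) : IsLogConcave ((volume : Measure ℝ).prod ν) := by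
  intro A B hA hB s t hs ht hst
  obtain ⟨z, hz⟩ := hν.exists_isQuantile hA
  obtain ⟨w, hw⟩ := hν.exists_isQuantile hB
  set μ := (volume : Measure ℝ).prod ν
  refine (ENNReal.ofReal_le_iff_le_toReal
    (((hA.smul hs.ne').add (hB.smul ht.ne')).measure_ne_top μ)).1 ?_
  calc ENNReal.ofReal (μ.real A ^ s * μ.real B ^ t)
      = ∫⁻ _ in Ioo (0 : ℝ) 1, ENNReal.ofReal (μ.real A ^ s * μ.real B ^ t) := by simp
    _ ≤ _ := setLIntegral_mono' measurableSet_Ioo fun τ hτ ↦ ENNReal.ofReal_le_ofReal <|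
        rpow_mul_rpow_le_mul_rpow_mul_rpow hs.le ht.le hst measureReal_nonneg measureReal_nonneg
          (hz.measureReal_slice_pos hA hτ) (hw.measureReal_slice_pos hB hτ)
    _ ≤ μ (s • A + t • B) := hν.setLIntegral_quantile_le hA hB hs ht hst hz hw

lemma eqOn_measureReal_slice (hν : IsLogConcave ν) (hA : IsOpenBody A) (hB : IsOpenBody B)
    (hs : 0 < s) (ht : 0 < t) (hst : s + t = 1) (hz : IsQuantile ν A z) (hw : IsQuantile ν B w)
    (hBA : ((volume : Measure ℝ).prod ν).real B = ((volume : Measure ℝ).prod ν).real A)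
    (hle : ((volume : Measure ℝ).prod ν).real (s • A + t • B) ≤
      ((volume : Measure ℝ).prod ν).real A) :
    EqOn (fun τ ↦ ν.real (Prod.mk (z τ) ⁻¹' A)) (fun τ ↦ ν.real (Prod.mk (w τ) ⁻¹' B))
      (Ioo 0 1) := by
  have hint := hν.setLIntegral_quantile_le hA hB hs ht hst hz hw
  rw [← ENNReal.ofReal_toReal (((hA.smul hs.ne').add (hB.smul ht.ne')).measure_ne_top _), hBA]
    at hint
  exact eqOn_of_setLIntegral_mul_rpow_mul_rpow_le isOpen_Ioo (by simp) hs ht hst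
    (hA.measureReal_pos _)
    ((hν.continuousOn_slice hA).comp hz.continuousOn fun τ ↦ hz.mem_image_fst)
    ((hν.continuousOn_slice hB).comp hw.continuousOn fun τ ↦ hw.mem_image_fst)
    (fun τ ↦ hz.measureReal_slice_pos hA) (fun τ ↦ hw.measureReal_slice_pos hB)
    (hint.trans (ENNReal.ofReal_le_ofReal hle))

/-- The quantile functions differ by a constant, which is read off the first moments. -/
lemma image_fst_eq (hν : IsLogConcave ν) (hA : IsOpenBody A) (hB : IsOpenBody B)
    (hs : 0 < s) (ht : 0 < t) (hst : s + t = 1)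
    (hBA : ((volume : Measure ℝ).prod ν).real B = ((volume : Measure ℝ).prod ν).real A)
    (hle : ((volume : Measure ℝ).prod ν).real (s • A + t • B) ≤
      ((volume : Measure ℝ).prod ν).real A)
    (hmoment : ∫ p in B, p.1 ∂(volume : Measure ℝ).prod ν =
      ∫ p in A, p.1 ∂(volume : Measure ℝ).prod ν) :
    Prod.fst '' B = Prod.fst '' A := by
  obtain ⟨z, hz⟩ := hν.exists_isQuantile hA
  obtain ⟨w, hw⟩ := hν.exists_isQuantile hB
  have hVpos := hA.measureReal_pos ((volume : Measure ℝ).prod ν)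
  have hderiv : ∀ τ ∈ Ioo (0 : ℝ) 1, HasDerivAt (fun τ ↦ w τ - z τ) 0 τ := fun τ hτ ↦ by
    have hslice : ν.real (Prod.mk (z τ) ⁻¹' A) = ν.real (Prod.mk (w τ) ⁻¹' B) :=
      hν.eqOn_measureReal_slice hA hB hs ht hst hz hw hBA hle hτ
    have hsub := (hw.hasDerivAt τ hτ).sub (hz.hasDerivAt τ hτ)
    rwa [hBA, hslice, sub_self] at hsub
  obtain ⟨k, hk⟩ := isOpen_Ioo.exists_is_const_of_deriv_eq_zero isPreconnected_Ioo
    (fun τ hτ ↦ (hderiv τ hτ).differentiableAt.differentiableWithinAt)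
    (fun τ hτ ↦ (hderiv τ hτ).deriv)
  have hwz : ∀ τ ∈ Ioo (0 : ℝ) 1, w τ = z τ + k := fun τ hτ ↦ by
    rw [← hk τ hτ, add_sub_cancel]
  have hzint : IntegrableOn z (Ioo 0 1) := by
    refine IntegrableOn.of_bound (by simp)
      (hz.continuousOn.aestronglyMeasurable measurableSet_Ioo) _
      ((ae_restrict_mem measurableSet_Ioo).mono fun τ hτ ↦
        hA.image_fst.isBounded.exists_norm_le.choose_spec _ (hz.mem_image_fst hτ))
  have hk0 : k = 0 := by
    rw [hz.integral_fst hA, hw.integral_fst hB, hBA, setIntegral_congr_fun measurableSet_Ioo hwz,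
      integral_add hzint (by simp)] at hmoment
    simpa using mul_left_cancel₀ hVpos.ne' hmoment
  rw [← hz.image_eq, ← hw.image_eq]
  exact image_congr fun τ hτ ↦ by rw [hwz τ hτ, hk0, add_zero]

end IsLogConcave

end Product

section Haar
open Module (finrank)

variable {E : Type*} [NormedAddCommGroup E] [NormedSpace ℝ E] [FiniteDimensional ℝ E]
  [MeasurableSpace E] [BorelSpace E]

lemma exists_measurePreserving_prod_ker (μ : Measure E) [μ.IsAddHaarMeasure] {f : E →L[ℝ] ℝ}
    (hf : f ≠ 0) : ∃ (ν : Measure f.ker) (e : E ≃L[ℝ] ℝ × f.ker), ν.IsAddHaarMeasure ∧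
      (∀ x, (e x).1 = f x) ∧ MeasurePreserving e μ ((volume : Measure ℝ).prod ν) := by
  have hf' : (f : E →ₗ[ℝ] ℝ) ≠ 0 := fun h ↦ hf (ContinuousLinearMap.coe_injective h)
  obtain ⟨x, hx⟩ := LinearMap.surjective hf' 1
  set e := ContinuousLinearEquiv.equivOfRightInverse f (.toSpanSingleton ℝ x) fun r ↦ by
    simp [show f x = 1 from hx]
  have hmap : (μ.map e).IsAddHaarMeasure := e.isAddHaarMeasure_map μ
  set ν₀ : Measure f.ker := Measure.addHaar
  obtain ⟨c, hc, hmap_eq⟩ : ∃ c : ℝ≥0∞, (c ≠ 0 ∧ c ≠ ∞) ∧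
      μ.map e = c • (volume : Measure ℝ).prod ν₀ := by
    refine ⟨Measure.addHaarScalarFactor (μ.map e) ((volume : Measure ℝ).prod ν₀), ⟨?_, by simp⟩,
      Measure.isAddLeftInvariant_eq_smul _ _⟩
    exact_mod_cast (Measure.addHaarScalarFactor_pos_of_isAddHaarMeasure _ _).ne'
  refine ⟨c • ν₀, e, .smul ν₀ hc.1 hc.2, fun y ↦ ?_, e.continuous.measurable, ?_⟩
  · exact ContinuousLinearEquiv.fst_equivOfRightInverse _ _ _ _
  · rw [hmap_eq, Measure.prod_smul_right]

theorem isLogConcave_addHaar (μ : Measure E) [μ.IsAddHaarMeasure] : IsLogConcave μ := by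
  induction hn : finrank ℝ E generalizing E with
  | zero =>
    have : Subsingleton E := Module.finrank_zero_iff.1 hn
    exact isLogConcave_of_subsingleton μ
  | succ n ih =>
    have : Nontrivial E := Module.nontrivial_of_finrank_pos (R := ℝ) (by lia)
    obtain ⟨x, hx⟩ := exists_ne (0 : E)
    obtain ⟨f, hfx⟩ := SeparatingDual.exists_ne_zero (R := ℝ) hx
    have hf : f ≠ 0 := fun h ↦ hfx (by simp [h])
    obtain ⟨ν, e, hν, -, he⟩ := exists_measurePreserving_prod_ker μ hf
    have hker : finrank ℝ f.ker = n := by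
      have := e.toLinearEquiv.finrank_eq
      rw [Module.finrank_prod, Module.finrank_self] at this
      lia
    exact (ih ν hker).volume_prod.of_measurePreserving e he

section Equality
variable {μ : Measure E} [μ.IsAddHaarMeasure] {A B : Set E}

lemma image_eq_of_measureReal_add_le (hA : IsOpenBody A) (hB : IsOpenBody B) {s t : ℝ}
    (hs : 0 < s) (ht : 0 < t) (hst : s + t = 1) (hBA : μ.real B = μ.real A)
    (hle : μ.real (s • A + t • B) ≤ μ.real A) (hcentroid : ∫ x in B, x ∂μ = ∫ x in A, x ∂μ)
    {f : E →L[ℝ] ℝ} (hf : f ≠ 0) : f '' B = f '' A := by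
  obtain ⟨ν, e, hν, hfst, he⟩ := exists_measurePreserving_prod_ker μ hf
  have hreal : ∀ {S : Set E}, IsOpenBody S →
      ((volume : Measure ℝ).prod ν).real (e '' S) = μ.real S := fun {S} hS ↦ by
    rw [← he.measureReal_preimage (hS.image_equiv e).isOpen.measurableSet.nullMeasurableSet,
      preimage_image_eq _ e.injective]
  have himage : ∀ S : Set E, Prod.fst '' (e '' S) = f '' S := fun S ↦ by
    simp only [image_image, hfst]
  have hmoment : ∀ {S : Set E}, IsOpenBody S →
      ∫ p in e '' S, p.1 ∂(volume : Measure ℝ).prod ν = f (∫ x in S, x ∂μ) := fun {S} hS ↦ by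
    rw [he.setIntegral_image_emb e.toHomeomorph.measurableEmbedding]
    simp_rw [hfst]
    exact f.integral_comp_comm (hS.integrableOn μ continuous_id)
  rw [← himage, ← himage]
  refine (isLogConcave_addHaar ν).image_fst_eq (hA.image_equiv e) (hB.image_equiv e) hs ht hst
    (by rw [hreal hA, hreal hB, hBA]) ?_ (by rw [hmoment hA, hmoment hB, hcentroid])
  rwa [← image_smul_set, ← image_smul_set, ← image_add, hreal hA,
    hreal ((hA.smul hs.ne').add (hB.smul ht.ne'))]

lemma subset_of_measureReal_add_le (hA : IsOpenBody A) (hB : IsOpenBody B) {s t : ℝ}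
    (hs : 0 < s) (ht : 0 < t) (hst : s + t = 1) (hBA : μ.real B = μ.real A)
    (hle : μ.real (s • A + t • B) ≤ μ.real A) (hcentroid : ∫ x in B, x ∂μ = ∫ x in A, x ∂μ) :
    B ⊆ A := by
  intro x hx
  by_contra hxA
  obtain ⟨f, hf⟩ := geometric_hahn_banach_open_point hA.convex hA.isOpen hxA
  obtain ⟨a, ha⟩ := hA.nonempty
  have hf0 : f ≠ 0 := by
    rintro rfl
    exact lt_irrefl _ (hf a ha)
  obtain ⟨y, hy, hyx⟩ : f x ∈ f '' A :=
    image_eq_of_measureReal_add_le hA hB hs ht hst hBA hle hcentroid hf0 ▸ mem_image_of_mem f hx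
  exact (hf y hy).ne hyx

lemma exists_setIntegral_vadd_eq (hA : IsOpenBody A) (p : E) :
    ∃ v : E, ∫ x in v +ᵥ A, x ∂μ = p := by
  have hμA := hA.measureReal_pos μ
  refine ⟨(μ.real A)⁻¹ • (p - ∫ x in A, x ∂μ), ?_⟩
  set v := (μ.real A)⁻¹ • (p - ∫ x in A, x ∂μ)
  calc ∫ x in v +ᵥ A, x ∂μ = ∫ x in A, (v + x) ∂μ :=
        (measurePreserving_add_left μ v).setIntegral_image_emb (measurableEmbedding_addLeft v) _ A
    _ = μ.real A • v + ∫ x in A, x ∂μ := by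
        rw [integral_add (hA.integrableOn μ continuous_const)
          (hA.integrableOn μ (f := fun x ↦ x) continuous_id), setIntegral_const]
    _ = p := by rw [smul_inv_smul₀ hμA.ne', sub_add_cancel]

theorem exists_eq_vadd_of_measureReal_add_le (hA : IsOpenBody A) (hB : IsOpenBody B) {s t : ℝ}
    (hs : 0 < s) (ht : 0 < t) (hst : s + t = 1) (hBA : μ.real B = μ.real A)
    (hle : μ.real (s • A + t • B) ≤ μ.real A) : ∃ v : E, B = v +ᵥ A := by
  obtain ⟨v, hv⟩ := exists_setIntegral_vadd_eq (μ := μ) hA (∫ x in B, x ∂μ)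
  have hreal : μ.real (v +ᵥ A) = μ.real A := by simp [Measure.real]
  have hle' : μ.real (s • (v +ᵥ A) + t • B) ≤ μ.real A := by
    rw [smul_set_vadd, vadd_add_assoc]
    simpa [Measure.real] using hle
  refine ⟨v, (subset_of_measureReal_add_le (hA.vadd v) hB hs ht hst (hBA.trans hreal.symm)
    (hle'.trans hreal.ge) hv.symm).antisymm ?_⟩
  rw [add_comm] at hst hle'
  exact subset_of_measureReal_add_le hB (hA.vadd v) ht hs hst (hreal.trans hBA.symm)
    (hle'.trans hBA.ge) hv

end Equality

end Haar

section VolumeRadius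
open Module (finrank finrank_pos)

lemma smul_inv_smul_add_smul_inv_smul {E : Type*} [AddCommGroup E] [Module ℝ E]
    {a b : ℝ} (ha : a ≠ 0) (hb : b ≠ 0) (A B : Set E) :
    (a / (a + b)) • a⁻¹ • A + (b / (a + b)) • b⁻¹ • B = (a + b)⁻¹ • (A + B) := by
  have hscale : ∀ {c : ℝ}, c ≠ 0 → c / (a + b) * c⁻¹ = (a + b)⁻¹ := fun hc ↦ by
    rw [div_mul_eq_mul_div, mul_inv_cancel₀ hc, one_div]
  rw [smul_smul, smul_smul, hscale ha, hscale hb, smul_add]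

variable {E : Type*} [NormedAddCommGroup E] [NormedSpace ℝ E] [MeasurableSpace E]
  (μ : Measure E) {A B : Set E}

/-- The `1 / n`-th power of the measure of `A`, where `n` is the dimension. Up to a constant
depending on `n` it is the radius of the ball with the same measure as `A`; it is homogeneous of
degree one. -/
def volumeRadius (μ : Measure E) (A : Set E) : ℝ := μ.real A ^ (finrank ℝ E : ℝ)⁻¹

lemma volumeRadius_pos (hA : 0 < μ.real A) : 0 < volumeRadius μ A := Real.rpow_pos_of_pos hA _

lemma volumeRadius_vadd [μ.IsAddLeftInvariant] (v : E) (A : Set E) :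
    volumeRadius μ (v +ᵥ A) = volumeRadius μ A := by
  rw [volumeRadius, volumeRadius, measureReal_def, measure_vadd, ← measureReal_def]

variable [Nontrivial E] [FiniteDimensional ℝ E]

lemma volumeRadius_pow (A : Set E) : volumeRadius μ A ^ finrank ℝ E = μ.real A :=
  Real.rpow_inv_natCast_pow measureReal_nonneg finrank_pos.ne'

variable [BorelSpace E] [μ.IsAddHaarMeasure]

lemma volumeRadius_smul {c : ℝ} (hc : 0 ≤ c) (A : Set E) :
    volumeRadius μ (c • A) = c * volumeRadius μ A := by
  rw [volumeRadius, measureReal_def, Measure.addHaar_smul, ENNReal.toReal_mul,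
    ENNReal.toReal_ofReal (abs_nonneg _), abs_of_nonneg (by positivity), ← measureReal_def,
    Real.mul_rpow (by positivity) measureReal_nonneg,
    Real.pow_rpow_inv_natCast hc finrank_pos.ne', volumeRadius]

lemma measureReal_inv_volumeRadius_smul (hA : 0 < μ.real A) :
    μ.real ((volumeRadius μ A)⁻¹ • A) = 1 := by
  have hr := volumeRadius_pos μ hA
  rw [← volumeRadius_pow, volumeRadius_smul μ (inv_nonneg.2 hr.le), inv_mul_cancel₀ hr.ne', one_pow]

/-- The **Brunn–Minkowski inequality**. -/
theorem volumeRadius_add_le (hA : IsOpenBody A) (hB : IsOpenBody B) :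
    volumeRadius μ A + volumeRadius μ B ≤ volumeRadius μ (A + B) := by
  have ha := volumeRadius_pos μ (hA.measureReal_pos μ)
  have hb := volumeRadius_pos μ (hB.measureReal_pos μ)
  have hlog := isLogConcave_addHaar μ (hA.smul (inv_ne_zero ha.ne')) (hB.smul (inv_ne_zero hb.ne'))
    (div_pos ha (add_pos ha hb)) (div_pos hb (add_pos ha hb)) (by field_simp)
  rw [smul_inv_smul_add_smul_inv_smul ha.ne' hb.ne',
    measureReal_inv_volumeRadius_smul μ (hA.measureReal_pos μ),
    measureReal_inv_volumeRadius_smul μ (hB.measureReal_pos μ), Real.one_rpow, Real.one_rpow,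
    mul_one, ← volumeRadius_pow, volumeRadius_smul μ (by positivity),
    one_le_pow_iff_of_nonneg (by unfold volumeRadius; positivity) finrank_pos.ne',
    ← div_eq_inv_mul, one_le_div (by positivity)] at hlog
  exact hlog

theorem exists_eq_vadd_smul_of_volumeRadius_add_le (hA : IsOpenBody A) (hB : IsOpenBody B)
    (h : volumeRadius μ (A + B) ≤ volumeRadius μ A + volumeRadius μ B) :
    ∃ (c : ℝ) (v : E), 0 < c ∧ B = v +ᵥ c • A := by
  have ha := volumeRadius_pos μ (hA.measureReal_pos μ)
  have hb := volumeRadius_pos μ (hB.measureReal_pos μ)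
  have hA1 := measureReal_inv_volumeRadius_smul μ (hA.measureReal_pos μ)
  have hB1 := measureReal_inv_volumeRadius_smul μ (hB.measureReal_pos μ)
  set a := volumeRadius μ A
  set b := volumeRadius μ B
  obtain ⟨v, hv⟩ := exists_eq_vadd_of_measureReal_add_le (hA.smul (inv_ne_zero ha.ne'))
    (hB.smul (inv_ne_zero hb.ne')) (div_pos ha (add_pos ha hb)) (div_pos hb (add_pos ha hb))
    (by field_simp) (hB1.trans hA1.symm) <| by
      rw [smul_inv_smul_add_smul_inv_smul ha.ne' hb.ne', hA1, ← volumeRadius_pow,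
        volumeRadius_smul μ (by positivity)]
      exact pow_le_one₀ (by unfold volumeRadius; positivity)
        (by rwa [← div_eq_inv_mul, div_le_one (by positivity)])
  refine ⟨b * a⁻¹, b • v, by positivity, ?_⟩
  rw [mul_smul, ← smul_set_vadd, ← hv, smul_inv_smul₀ hb.ne']

end VolumeRadius

/-! ### Convex bodies, support functions and gauges -/

namespace IsConvexBody
variable {m : ℕ} {K L : Set (Euc m)}

lemma convex (hK : IsConvexBody K) : Convex ℝ K := hK.1

lemma isCompact (hK : IsConvexBody K) : IsCompact K := hK.2.1

lemma interior_nonempty (hK : IsConvexBody K) : (interior K).Nonempty := hK.2.2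

lemma nonempty (hK : IsConvexBody K) : K.Nonempty := hK.interior_nonempty.mono interior_subset

lemma measurableSet (hK : IsConvexBody K) : MeasurableSet K := hK.isCompact.measurableSet

lemma volume_ne_top (hK : IsConvexBody K) : volume K ≠ ∞ := hK.isCompact.measure_lt_top.ne

lemma closure_interior (hK : IsConvexBody K) : closure (interior K) = K := by
  rw [hK.convex.closure_interior_eq_closure_of_nonempty_interior hK.interior_nonempty,
    hK.isCompact.isClosed.closure_eq]

lemma volumeReal_interior (hK : IsConvexBody K) : volume.real (interior K) = volume.real K :=
  measureReal_congr (interior_ae_eq_of_null_frontier (hK.convex.addHaar_frontier volume))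

lemma volumeRadius_interior (hK : IsConvexBody K) :
    volumeRadius volume (interior K) = volumeRadius volume K := by
  rw [volumeRadius, hK.volumeReal_interior, volumeRadius]

lemma isOpenBody_interior (hK : IsConvexBody K) : IsOpenBody (interior K) where
  isOpen := isOpen_interior
  convex := hK.convex.interior
  isBounded := hK.isCompact.isBounded.subset interior_subset
  nonempty := hK.interior_nonempty

lemma volumeRadius_pos (hK : IsConvexBody K) : 0 < volumeRadius volume K :=
  _root_.volumeRadius_pos volume
    (hK.volumeReal_interior ▸ hK.isOpenBody_interior.measureReal_pos volume)

lemma smul (hK : IsConvexBody K) {c : ℝ} (hc : c ≠ 0) : IsConvexBody (c • K) :=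
  ⟨hK.convex.smul c, hK.isCompact.smul c,
    (interior_smul₀ hc K).symm ▸ hK.interior_nonempty.smul_set⟩

lemma vadd (hK : IsConvexBody K) (v : Euc m) : IsConvexBody (v +ᵥ K) :=
  ⟨hK.convex.vadd v, hK.isCompact.vadd v, interior_vadd v K ▸ hK.interior_nonempty.vadd_set⟩

lemma interior_add_interior_subset : interior K + interior L ⊆ interior (K + L) :=
  interior_maximal (add_subset_add interior_subset interior_subset) isOpen_interior.add_right

lemma add (hK : IsConvexBody K) (hL : IsConvexBody L) : IsConvexBody (K + L) :=
  ⟨hK.convex.add hL.convex, hK.isCompact.add hL.isCompact,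
    (hK.interior_nonempty.add hL.interior_nonempty).mono interior_add_interior_subset⟩

lemma volumeRadius_interior_add_interior_le (hK : IsConvexBody K) (hL : IsConvexBody L) :
    volumeRadius volume (interior K + interior L) ≤ volumeRadius volume (K + L) :=
  Real.rpow_le_rpow measureReal_nonneg (measureReal_mono
    (add_subset_add interior_subset interior_subset) (hK.add hL).volume_ne_top) (by positivity)

section NeZero
variable [NeZero m]

lemma ofReal_volumeRadius_pow (hK : IsConvexBody K) :
    ENNReal.ofReal (volumeRadius volume K ^ m) = volume K := by
  have h := volumeRadius_pow volume K
  rw [finrank_euclideanSpace_fin] at h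
  rw [h, ofReal_measureReal hK.volume_ne_top]

lemma volumeRadius_add_le (hK : IsConvexBody K) (hL : IsConvexBody L) :
    volumeRadius volume K + volumeRadius volume L ≤ volumeRadius volume (K + L) := by
  rw [← hK.volumeRadius_interior, ← hL.volumeRadius_interior]
  exact (_root_.volumeRadius_add_le volume hK.isOpenBody_interior hL.isOpenBody_interior).trans
    (hK.volumeRadius_interior_add_interior_le hL)

theorem exists_eq_vadd_smul_of_volumeRadius_add_le (hK : IsConvexBody K) (hL : IsConvexBody L)
    (h : volumeRadius volume (K + L) ≤ volumeRadius volume K + volumeRadius volume L) :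
    ∃ (c : ℝ) (v : Euc m), 0 < c ∧ L = v +ᵥ c • K := by
  obtain ⟨c, v, hc, hv⟩ := _root_.exists_eq_vadd_smul_of_volumeRadius_add_le volume
    hK.isOpenBody_interior hL.isOpenBody_interior <| by
      rw [hK.volumeRadius_interior, hL.volumeRadius_interior]
      exact (hK.volumeRadius_interior_add_interior_le hL).trans h
  refine ⟨c, v, hc, ?_⟩
  rw [← hL.closure_interior, hv, closure_vadd, closure_smul₀' hc.ne', hK.closure_interior]

end NeZero

end IsConvexBody

section SupportFunction
variable {E : Type*} [NormedAddCommGroup E] [InnerProductSpace ℝ E] {K L : Set E}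

/-- The support function `h_L(u) = max_{y ∈ L} ⟨y, u⟩` of a nonempty compact set `L`. -/
def supportFun (L : Set E) (u : E) : ℝ := sSup ((fun y ↦ ⟪y, u⟫) '' L)

lemma inner_le_supportFun (hL : IsCompact L) {y : E} (hy : y ∈ L) (u : E) :
    ⟪y, u⟫ ≤ supportFun L u :=
  le_csSup (hL.image (by fun_prop)).bddAbove (mem_image_of_mem _ hy)

lemma supportFun_le (hL : L.Nonempty) {u : E} {c : ℝ} (h : ∀ y ∈ L, ⟪y, u⟫ ≤ c) :
    supportFun L u ≤ c :=
  csSup_le (hL.image _) (forall_mem_image.2 h)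

lemma exists_inner_eq_supportFun (hL : IsCompact L) (hne : L.Nonempty) (u : E) :
    ∃ y ∈ L, ⟪y, u⟫ = supportFun L u :=
  (hL.image (f := fun y ↦ ⟪y, u⟫) (by fun_prop)).sSup_mem (hne.image _)

lemma supportFun_nonneg (hL : IsCompact L) (h0 : (0 : E) ∈ L) (u : E) : 0 ≤ supportFun L u := by
  simpa only [inner_zero_left] using inner_le_supportFun hL h0 u

lemma supportFun_smul_right (hL : IsCompact L) (hne : L.Nonempty) {c : ℝ} (hc : 0 ≤ c) (u : E) :
    supportFun L (c • u) = c * supportFun L u := by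
  refine le_antisymm (supportFun_le hne fun y hy ↦ ?_) ?_
  · rw [inner_smul_right]
    exact mul_le_mul_of_nonneg_left (inner_le_supportFun hL hy u) hc
  · obtain ⟨y, hy, h⟩ := exists_inner_eq_supportFun hL hne u
    rw [← h, ← inner_smul_right]
    exact inner_le_supportFun hL hy _

lemma supportFun_smul_left (hL : IsCompact L) (hne : L.Nonempty) {c : ℝ} (hc : 0 ≤ c) (u : E) :
    supportFun (c • L) u = c * supportFun L u := by
  rw [← supportFun_smul_right hL hne hc, supportFun, supportFun, ← image_smul, image_image]
  simp only [real_inner_smul_left, real_inner_smul_right]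

lemma supportFun_add (hK : IsCompact K) (hKn : K.Nonempty) (hL : IsCompact L) (hLn : L.Nonempty)
    (u : E) : supportFun (K + L) u = supportFun K u + supportFun L u := by
  refine le_antisymm (supportFun_le (hKn.add hLn) ?_) ?_
  · rintro _ ⟨x, hx, y, hy, rfl⟩
    rw [inner_add_left]
    exact add_le_add (inner_le_supportFun hK hx u) (inner_le_supportFun hL hy u)
  · obtain ⟨x, hx, h⟩ := exists_inner_eq_supportFun hK hKn u
    obtain ⟨y, hy, h'⟩ := exists_inner_eq_supportFun hL hLn u
    rw [← h, ← h', ← inner_add_left]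
    exact inner_le_supportFun (hK.add hL) (add_mem_add hx hy) _

lemma exists_lipschitzWith_supportFun (hL : IsCompact L) (hne : L.Nonempty) :
    ∃ C, LipschitzWith C (supportFun L) := by
  obtain ⟨R, -, hR⟩ := hL.isBounded.exists_pos_norm_le
  refine ⟨R.toNNReal, LipschitzWith.of_le_add_mul' R fun u v ↦ supportFun_le hne fun y hy ↦ ?_⟩
  calc ⟪y, u⟫ = ⟪y, v⟫ + ⟪y, u - v⟫ := by rw [inner_sub_right]; ring
    _ ≤ supportFun L v + ‖y‖ * ‖u - v‖ :=
      add_le_add (inner_le_supportFun hL hy v) (real_inner_le_norm _ _)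
    _ ≤ supportFun L v + R * dist u v := by
      rw [dist_eq_norm]
      gcongr
      exact hR y hy

lemma continuous_supportFun (hL : IsCompact L) (hne : L.Nonempty) : Continuous (supportFun L) :=
  (exists_lipschitzWith_supportFun hL hne).choose_spec.continuous

end SupportFunction

section Gauge
variable {E : Type*} [NormedAddCommGroup E] [NormedSpace ℝ E] {K : Set E}

lemma add_fderiv_sub_le_of_convexOn {g : E → ℝ} (hg : ConvexOn ℝ univ g) {x : E}
    (hx : DifferentiableAt ℝ g x) (y : E) : g x + fderiv ℝ g x (y - x) ≤ g y := by
  have hline : HasDerivAt (g ∘ AffineMap.lineMap (k := ℝ) x y) (fderiv ℝ g x (y - x)) 0 :=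
    hx.hasFDerivAt.comp_hasDerivAt_of_eq 0 AffineMap.hasDerivAt_lineMap
      (AffineMap.lineMap_apply_zero x y).symm
  have hslope := (hg.comp_affineMap (AffineMap.lineMap x y)).le_slope_of_hasDerivAt
    (mem_univ 0) (mem_univ 1) zero_lt_one hline
  rw [slope_def_field, sub_zero, div_one, Function.comp_apply, Function.comp_apply,
    AffineMap.lineMap_apply_one, AffineMap.lineMap_apply_zero] at hslope
  linarith

lemma convexOn_gauge (hK : Convex ℝ K) (hK0 : Absorbent ℝ K) : ConvexOn ℝ univ (gauge K) := by
  refine ⟨convex_univ, fun x _ y _ a b ha hb _ ↦ (gauge_add_le hK hK0 _ _).trans_eq ?_⟩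
  rw [gauge_smul_of_nonneg ha, gauge_smul_of_nonneg hb]

lemma fderiv_gauge_self {x : E} (hx : DifferentiableAt ℝ (gauge K) x) :
    fderiv ℝ (gauge K) x x = gauge K x := by
  have hray : HasDerivAt (fun t : ℝ ↦ gauge K (t • x)) (fderiv ℝ (gauge K) x x) 1 :=
    hx.hasFDerivAt.comp_hasDerivAt_of_eq (1 : ℝ)
      (by simpa only [one_smul, id_eq] using (hasDerivAt_id (1 : ℝ)).smul_const x)
      (one_smul ℝ x).symm
  have hlinear : HasDerivAt (fun t : ℝ ↦ gauge K (t • x)) (gauge K x) 1 := by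
    refine HasDerivAt.congr_of_eventuallyEq (f := fun t : ℝ ↦ t * gauge K x) ?_ ?_
    · simpa only [one_mul, id_eq] using (hasDerivAt_id (1 : ℝ)).mul_const (gauge K x)
    · filter_upwards [Ioi_mem_nhds (zero_lt_one (α := ℝ))] with t ht
      exact gauge_smul_of_nonneg (le_of_lt ht) x
  exact hray.unique hlinear

end Gauge

section Gradient
variable {E : Type*} [NormedAddCommGroup E] [InnerProductSpace ℝ E] [CompleteSpace E] {f : E → ℝ}

lemma inner_gradient (x y : E) : ⟪y, gradient f x⟫ = fderiv ℝ f x y := by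
  rw [real_inner_comm, gradient, InnerProductSpace.toDual_symm_apply]

lemma measurable_gradient [MeasurableSpace E] [BorelSpace E] : Measurable (gradient f) :=
  (InnerProductSpace.toDual ℝ E).symm.continuous.measurable.comp (measurable_fderiv ℝ f)

end Gradient

namespace IsConvexBody
variable {m : ℕ} {K L : Set (Euc m)}

lemma absorbent (h0 : (0 : Euc m) ∈ interior K) : Absorbent ℝ K :=
  absorbent_nhds_zero (mem_interior_iff_mem_nhds.1 h0)

lemma gauge_le_one_iff (hK : IsConvexBody K) (h0 : (0 : Euc m) ∈ interior K) {x : Euc m} :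
    gauge K x ≤ 1 ↔ x ∈ K := by
  rw [gauge_le_one_iff_mem_closure hK.convex (mem_interior_iff_mem_nhds.1 h0),
    hK.isCompact.isClosed.closure_eq]

lemma gauge_le_iff (hK : IsConvexBody K) (h0 : (0 : Euc m) ∈ interior K) {x : Euc m} {s : ℝ}
    (hs : 0 < s) : gauge K x ≤ s ↔ x ∈ s • K := by
  rw [mem_smul_set_iff_inv_smul_mem₀ hs.ne', ← hK.gauge_le_one_iff h0,
    gauge_smul_of_nonneg (inv_nonneg.2 hs.le), smul_eq_mul, inv_mul_le_iff₀ hs, mul_one]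

lemma gauge_pos (hK : IsConvexBody K) (h0 : (0 : Euc m) ∈ interior K) {x : Euc m} (hx : x ≠ 0) :
    0 < gauge K x :=
  (_root_.gauge_pos (absorbent h0)
    ((NormedSpace.isVonNBounded_iff ℝ).2 hK.isCompact.isBounded)).2 hx

lemma exists_lipschitzWith_gauge (hK : IsConvexBody K) (h0 : (0 : Euc m) ∈ interior K) :
    ∃ C, LipschitzWith C (gauge K) := by
  obtain ⟨r, hr, h⟩ := Metric.mem_nhds_iff.1 (mem_interior_iff_mem_nhds.1 h0)
  exact ⟨_, hK.convex.lipschitzWith_gauge (r := ⟨r, hr.le⟩) hr h⟩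

lemma continuous_gauge (hK : IsConvexBody K) (h0 : (0 : Euc m) ∈ interior K) :
    Continuous (gauge K) := (hK.exists_lipschitzWith_gauge h0).choose_spec.continuous

lemma ae_differentiableAt_gauge (hK : IsConvexBody K) (h0 : (0 : Euc m) ∈ interior K) :
    ∀ᵐ x : Euc m, DifferentiableAt ℝ (gauge K) x :=
  (hK.exists_lipschitzWith_gauge h0).choose_spec.ae_differentiableAt

lemma fderiv_gauge_le (hK : IsConvexBody K) (h0 : (0 : Euc m) ∈ interior K) {x : Euc m}
    (hx : DifferentiableAt ℝ (gauge K) x) (y : Euc m) : fderiv ℝ (gauge K) x y ≤ gauge K y := by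
  have h := add_fderiv_sub_le_of_convexOn (convexOn_gauge hK.convex (absorbent h0)) hx y
  rwa [map_sub, fderiv_gauge_self hx, add_sub_cancel] at h

lemma supportFun_gradient_gauge (hK : IsConvexBody K) (h0 : (0 : Euc m) ∈ interior K)
    {x : Euc m} (hx : DifferentiableAt ℝ (gauge K) x) (hx0 : x ≠ 0) :
    supportFun K (gradient (gauge K) x) = 1 := by
  refine le_antisymm (supportFun_le hK.nonempty fun y hy ↦ ?_) ?_
  · rw [inner_gradient]
    exact (hK.fderiv_gauge_le h0 hx y).trans ((hK.gauge_le_one_iff h0).2 hy)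
  · have hpos := hK.gauge_pos h0 hx0
    have hmem : (gauge K x)⁻¹ • x ∈ K := by
      rw [← mem_smul_set_iff_inv_smul_mem₀ hpos.ne', ← hK.gauge_le_iff h0 hpos]
    have h := inner_le_supportFun hK.isCompact hmem (gradient (gauge K) x)
    rwa [inner_gradient, map_smul, fderiv_gauge_self hx, smul_eq_mul, inv_mul_cancel₀ hpos.ne']
      at h

end IsConvexBody

/-! ### Mixed volumes and Minkowski's first inequality -/

/-- The first mixed volume `V(K, …, K, L)` of convex bodies containing the origin, as the integral
of the support function of `L` at the gradient of the gauge of `K`. Integrating in polar coordinates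
adapted to `K` turns it into the usual integral of `supportFun L` against the surface area measure
of `K`. -/
def mixedVol {m : ℕ} (K L : Set (Euc m)) : ℝ≥0∞ :=
  ∫⁻ x in K, ENNReal.ofReal (supportFun L (gradient (gauge K) x))

/-- The first variation, in direction `L`, of the hat function `x ↦ (1 - gauge K x)⁺` of `K`: to
first order in `ε` its integral grows by `ε * mixedVol K L`, while its superlevel set at height
`t` contains almost all of `(1 - t) • K + ε • L`. -/
def hatVariation {m : ℕ} (K L : Set (Euc m)) (ε : ℝ) (x : Euc m) : ℝ :=
  max (1 - gauge K x + ε * supportFun L (gradient (gauge K) x)) 0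

lemma lintegral_one_sub_pow (k : ℕ) :
    ∫⁻ t in Ioo (0 : ℝ) 1, ENNReal.ofReal ((1 - t) ^ k) = ENNReal.ofReal (1 / (k + 1)) := by
  rw [← ofReal_integral_eq_lintegral_ofReal]
  · rw [← integral_Ioc_eq_integral_Ioo, ← intervalIntegral.integral_of_le zero_le_one,
      intervalIntegral.integral_comp_sub_left (fun t ↦ t ^ k) 1, sub_self, sub_zero, integral_pow,
      one_pow, zero_pow k.succ_ne_zero, sub_zero]
  · exact ((by fun_prop : Continuous fun t : ℝ ↦ (1 - t) ^ k).integrableOn_Icc).mono_set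
      Ioo_subset_Icc_self
  · filter_upwards [ae_restrict_mem measurableSet_Ioo] with t ht
    exact pow_nonneg (sub_nonneg.2 ht.2.le) _

namespace IsConvexBody
variable {m : ℕ} {K L N : Set (Euc m)}

lemma measurable_supportFun_gradient (hL : IsConvexBody L) (f : Euc m → ℝ) :
    Measurable fun x ↦ supportFun L (gradient f x) :=
  (continuous_supportFun hL.isCompact hL.nonempty).measurable.comp measurable_gradient

lemma measurable_hatVariation (hK : IsConvexBody K) (h0 : (0 : Euc m) ∈ interior K)
    (hL : IsConvexBody L) (ε : ℝ) : Measurable (hatVariation K L ε) := by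
  have hs := hL.measurable_supportFun_gradient (gauge K)
  have hg := (hK.continuous_gauge h0).measurable
  unfold hatVariation
  fun_prop

lemma mixedVol_add (hL : IsConvexBody L) (hN : IsConvexBody N) (hL0 : (0 : Euc m) ∈ L)
    (hN0 : (0 : Euc m) ∈ N) : mixedVol K (L + N) = mixedVol K L + mixedVol K N := by
  rw [mixedVol, mixedVol, mixedVol,
    ← lintegral_add_left (hL.measurable_supportFun_gradient _).ennreal_ofReal]
  refine lintegral_congr fun x ↦ ?_
  rw [supportFun_add hL.isCompact hL.nonempty hN.isCompact hN.nonempty,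
    ENNReal.ofReal_add (supportFun_nonneg hL.isCompact hL0 _)
      (supportFun_nonneg hN.isCompact hN0 _)]

lemma mixedVol_smul (hL : IsConvexBody L) {c : ℝ} (hc : 0 ≤ c) :
    mixedVol K (c • L) = ENNReal.ofReal c * mixedVol K L := by
  rw [mixedVol, mixedVol,
    ← lintegral_const_mul _ (hL.measurable_supportFun_gradient _).ennreal_ofReal]
  refine lintegral_congr fun x ↦ ?_
  rw [supportFun_smul_left hL.isCompact hL.nonempty hc, ENNReal.ofReal_mul hc]

lemma exists_supportFun_gradient_le (hK : IsConvexBody K) (h0 : (0 : Euc m) ∈ interior K)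
    (hL : IsConvexBody L) : ∃ H, 0 ≤ H ∧ ∀ x, supportFun L (gradient (gauge K) x) ≤ H := by
  obtain ⟨C, hC⟩ := hK.exists_lipschitzWith_gauge h0
  obtain ⟨R, hR0, hR⟩ := hL.isCompact.isBounded.exists_pos_norm_le
  refine ⟨R * C, by positivity, fun x ↦ supportFun_le hL.nonempty fun y hy ↦ ?_⟩
  have hgrad : ‖gradient (gauge K) x‖ ≤ C := by
    rw [gradient, LinearIsometryEquiv.norm_map]
    exact norm_fderiv_le_of_lipschitz ℝ hC
  exact (real_inner_le_norm _ _).trans (mul_le_mul (hR y hy) hgrad (norm_nonneg _) hR0.le)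

lemma gauge_sub_le_of_mem_smul_add_smul (hK : IsConvexBody K) (h0 : (0 : Euc m) ∈ interior K)
    (hL : IsCompact L) {s ε : ℝ} (hs : 0 < s) (hε : 0 ≤ ε) {x : Euc m}
    (hx : x ∈ s • K + ε • L) (hd : DifferentiableAt ℝ (gauge K) x) :
    gauge K x - ε * supportFun L (gradient (gauge K) x) ≤ s := by
  obtain ⟨y, hy, _, ⟨l, hl, rfl⟩, rfl⟩ := hx
  set x := y + ε • l with hxy
  have htangent := add_fderiv_sub_le_of_convexOn (convexOn_gauge hK.convex (absorbent h0)) hd y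
  have hsupp := inner_le_supportFun hL hl (gradient (gauge K) x)
  rw [inner_gradient] at hsupp
  rw [show y - x = -(ε • l) by rw [hxy]; abel, map_neg, map_smul, smul_eq_mul] at htangent
  have hy' := (hK.gauge_le_iff h0 hs).2 hy
  linarith [mul_le_mul_of_nonneg_left hsupp hε]

lemma volume_smul_add_smul_le (hK : IsConvexBody K) (h0 : (0 : Euc m) ∈ interior K)
    (hL : IsCompact L) {t ε : ℝ} (ht : t < 1) (hε : 0 ≤ ε) :
    volume ((1 - t) • K + ε • L) ≤ volume {x | t ≤ hatVariation K L ε x} := by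
  refine measure_mono_ae ?_
  filter_upwards [hK.ae_differentiableAt_gauge h0] with x hd hx
  have h := hK.gauge_sub_le_of_mem_smul_add_smul h0 hL (sub_pos.2 ht) hε hx hd
  exact le_max_of_le_left (by linarith)

lemma lintegral_one_sub_gauge_le (hK : IsConvexBody K) (h0 : (0 : Euc m) ∈ interior K) :
    ∫⁻ x in K, ENNReal.ofReal (1 - gauge K x) ≤ ENNReal.ofReal (1 / (m + 1)) * volume K := by
  have hnn : 0 ≤ᵐ[volume.restrict K] fun x ↦ 1 - gauge K x := by
    filter_upwards [ae_restrict_mem hK.measurableSet] with x hx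
    exact sub_nonneg.2 ((hK.gauge_le_one_iff h0).2 hx)
  rw [lintegral_eq_lintegral_meas_lt _ hnn
    (continuous_const.sub (hK.continuous_gauge h0)).aemeasurable]
  calc ∫⁻ t in Ioi 0, volume.restrict K {x | t < 1 - gauge K x}
      ≤ ∫⁻ t in Ioi 0, (Iio 1).indicator (fun t ↦ ENNReal.ofReal ((1 - t) ^ m) * volume K) t := by
        refine lintegral_mono fun t ↦ ?_
        by_cases ht : t < 1
        · have hsub : {x | t < 1 - gauge K x} ⊆ (1 - t) • K := fun x (hx : t < 1 - gauge K x) ↦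
            (hK.gauge_le_iff h0 (sub_pos.2 ht)).1 (by linarith)
          rw [indicator_of_mem (mem_Iio.2 ht)]
          refine (Measure.restrict_apply_le _ _).trans ((measure_mono hsub).trans_eq ?_)
          rw [Measure.addHaar_smul_of_nonneg _ (sub_nonneg.2 ht.le), finrank_euclideanSpace_fin]
        · have hempty : {x | t < 1 - gauge K x} = ∅ :=
            eq_empty_of_forall_notMem fun x (hx : t < 1 - gauge K x) ↦
              ht (by linarith [gauge_nonneg (s := K) x])
          rw [hempty, measure_empty]
          exact zero_le
    _ = ENNReal.ofReal (1 / (m + 1)) * volume K := by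
        rw [setLIntegral_indicator measurableSet_Iio, Iio_inter_Ioi,
          lintegral_mul_const' _ _ hK.volume_ne_top, lintegral_one_sub_pow]

lemma setLIntegral_hatVariation_le (hK : IsConvexBody K) (h0 : (0 : Euc m) ∈ interior K)
    (hL : IsConvexBody L) (hL0 : (0 : Euc m) ∈ L) {ε : ℝ} (hε : 0 ≤ ε) :
    ∫⁻ x in K, ENNReal.ofReal (hatVariation K L ε x) ≤
      ENNReal.ofReal (1 / (m + 1)) * volume K + ENNReal.ofReal ε * mixedVol K L := by
  have hs := hL.measurable_supportFun_gradient (gauge K)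
  have hg := (hK.continuous_gauge h0).measurable
  grw [← hK.lintegral_one_sub_gauge_le h0]
  rw [mixedVol, ← lintegral_const_mul _ (by fun_prop), ← lintegral_add_left (by fun_prop)]
  refine setLIntegral_mono' hK.measurableSet fun x hx ↦ ?_
  have hx1 := sub_nonneg.2 ((hK.gauge_le_one_iff h0).2 hx)
  have hsupp := mul_nonneg hε (supportFun_nonneg hL.isCompact hL0 (gradient (gauge K) x))
  rw [hatVariation, ← ENNReal.ofReal_mul hε, ← ENNReal.ofReal_add hx1 hsupp,
    max_eq_left (add_nonneg hx1 hsupp)]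

lemma volume_smul_sdiff_self (hK : IsConvexBody K) (h0 : (0 : Euc m) ∈ interior K) {c : ℝ}
    (hc : 1 ≤ c) : volume (c • K \ K) = ENNReal.ofReal (c ^ m - 1) * volume K := by
  have hsub : K ⊆ c • K := fun x hx ↦ (hK.gauge_le_iff h0 (by linarith)).1
    (((hK.gauge_le_one_iff h0).2 hx).trans hc)
  rw [measure_sdiff hsub hK.measurableSet.nullMeasurableSet hK.volume_ne_top,
    Measure.addHaar_smul_of_nonneg _ (by linarith), finrank_euclideanSpace_fin,
    ENNReal.ofReal_sub _ zero_le_one, ENNReal.ofReal_one,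
    ENNReal.sub_mul fun _ _ ↦ hK.volume_ne_top, one_mul]

lemma setLIntegral_compl_hatVariation_le (hK : IsConvexBody K) (h0 : (0 : Euc m) ∈ interior K)
    {ε H : ℝ} (hε : 0 ≤ ε) (hH : 0 ≤ H) (hHle : ∀ x, supportFun L (gradient (gauge K) x) ≤ H) :
    ∫⁻ x in Kᶜ, ENNReal.ofReal (hatVariation K L ε x) ≤
      ENNReal.ofReal (ε * H) * (ENNReal.ofReal ((1 + ε * H) ^ m - 1) * volume K) := by
  have hεH : 0 ≤ ε * H := mul_nonneg hε hH
  have hpos : 0 < 1 + ε * H := by positivity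
  have hmeas : MeasurableSet ((1 + ε * H) • K) := (hK.smul hpos.ne').measurableSet
  calc ∫⁻ x in Kᶜ, ENNReal.ofReal (hatVariation K L ε x)
      ≤ ∫⁻ x in Kᶜ, ((1 + ε * H) • K).indicator (fun _ ↦ ENNReal.ofReal (ε * H)) x := by
        refine setLIntegral_mono' hK.measurableSet.compl fun x hx ↦ ?_
        rw [mem_compl_iff, ← hK.gauge_le_one_iff h0, not_le] at hx
        have hsupp : ε * supportFun L (gradient (gauge K) x) ≤ ε * H :=
          mul_le_mul_of_nonneg_left (hHle x) hε
        by_cases hxK : x ∈ (1 + ε * H) • K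
        · rw [indicator_of_mem hxK]
          exact ENNReal.ofReal_le_ofReal (max_le (by linarith) hεH)
        · rw [indicator_of_notMem hxK]
          rw [← hK.gauge_le_iff h0 hpos, not_le] at hxK
          rw [hatVariation, max_eq_right (by linarith), ENNReal.ofReal_zero]
    _ = _ := by
        rw [setLIntegral_indicator hmeas, setLIntegral_const, ← sdiff_eq,
          hK.volume_smul_sdiff_self h0 (by linarith)]

variable [NeZero m]

lemma mixedVol_self (hK : IsConvexBody K) (h0 : (0 : Euc m) ∈ interior K) :
    mixedVol K K = volume K := by
  rw [mixedVol, ← setLIntegral_one]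
  refine lintegral_congr_ae ?_
  filter_upwards [ae_restrict_of_ae (hK.ae_differentiableAt_gauge h0),
    ae_restrict_of_ae (Measure.ae_ne volume 0)] with x hx hx0
  rw [hK.supportFun_gradient_gauge h0 hx hx0, ENNReal.ofReal_one]

lemma mixedVol_smul_self (hK : IsConvexBody K) (h0 : (0 : Euc m) ∈ interior K) {c : ℝ}
    (hc : 0 < c) : mixedVol (c • K) K = ENNReal.ofReal (c ^ (m - 1)) * volume K := by
  have h := (hK.smul hc.ne').mixedVol_self
    (by rw [interior_smul₀ hc.ne']; exact ⟨0, h0, smul_zero c⟩)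
  rw [hK.mixedVol_smul hc.le, Measure.addHaar_smul_of_nonneg _ hc.le, finrank_euclideanSpace_fin,
    ← mul_pow_sub_one (NeZero.ne m), ENNReal.ofReal_mul hc.le, mul_assoc] at h
  exact (ENNReal.mul_right_inj (ENNReal.ofReal_pos.2 hc).ne' ENNReal.ofReal_ne_top).1 h

lemma le_volume_smul_add_smul (hK : IsConvexBody K) (hL : IsConvexBody L) {s ε : ℝ}
    (hs : 0 < s) (hε : 0 < ε) :
    ENNReal.ofReal (s ^ m) * volume K + ENNReal.ofReal (s ^ (m - 1)) *
        ENNReal.ofReal (m * (ε * (volumeRadius volume K ^ (m - 1) * volumeRadius volume L))) ≤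
      volume (s • K + ε • L) := by
  have ha := hK.volumeRadius_pos
  have hb := hL.volumeRadius_pos
  have hbm := (hK.smul hs.ne').volumeRadius_add_le (hL.smul hε.ne')
  rw [volumeRadius_smul _ hs.le, volumeRadius_smul _ hε.le] at hbm
  rw [← hK.ofReal_volumeRadius_pow,
    ← ((hK.smul hs.ne').add (hL.smul hε.ne')).ofReal_volumeRadius_pow,
    ← ENNReal.ofReal_mul (by positivity), ← ENNReal.ofReal_mul (by positivity),
    ← ENNReal.ofReal_add (by positivity) (by positivity)]
  refine ENNReal.ofReal_le_ofReal ?_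
  calc _ = (s * volumeRadius volume K) ^ m +
        m * (s * volumeRadius volume K) ^ (m - 1) * (ε * volumeRadius volume L) := by ring
    _ ≤ (s * volumeRadius volume K + ε * volumeRadius volume L) ^ m :=
      pow_add_mul_le_add_pow (by positivity) (by positivity) m
    _ ≤ _ := by gcongr

lemma le_lintegral_hatVariation (hK : IsConvexBody K) (h0 : (0 : Euc m) ∈ interior K)
    (hL : IsConvexBody L) {ε : ℝ} (hε : 0 < ε) :
    ENNReal.ofReal (1 / (m + 1)) * volume K +
        ENNReal.ofReal (ε * (volumeRadius volume K ^ (m - 1) * volumeRadius volume L)) ≤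
      ∫⁻ x, ENNReal.ofReal (hatVariation K L ε x) := by
  rw [lintegral_eq_lintegral_meas_le (f := hatVariation K L ε) volume
    (Filter.Eventually.of_forall fun x ↦ le_max_right _ _)
    (hK.measurable_hatVariation h0 hL ε).aemeasurable]
  grw [← lintegral_mono_set (Ioo_subset_Ioi_self : Ioo (0 : ℝ) 1 ⊆ Ioi 0),
    ← setLIntegral_mono' measurableSet_Ioo fun t ht ↦
      (hK.le_volume_smul_add_smul hL (sub_pos.2 ht.2) hε).trans
        (hK.volume_smul_add_smul_le h0 hL.isCompact ht.2 hε.le)]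
  rw [lintegral_add_left (by fun_prop), lintegral_mul_const' _ _ hK.volume_ne_top,
    lintegral_mul_const' _ _ ENNReal.ofReal_ne_top, lintegral_one_sub_pow, lintegral_one_sub_pow,
    ← ENNReal.ofReal_mul (by positivity), Nat.cast_pred (NeZero.pos m), sub_add_cancel,
    one_div (m : ℝ),
    inv_mul_cancel_left₀ (NeZero.ne (m : ℝ))]

/-- **Minkowski's first inequality**. -/
theorem le_mixedVol (hK : IsConvexBody K) (h0 : (0 : Euc m) ∈ interior K) (hL : IsConvexBody L)
    (hL0 : (0 : Euc m) ∈ L) :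
    ENNReal.ofReal (volumeRadius volume K ^ (m - 1) * volumeRadius volume L) ≤ mixedVol K L := by
  obtain ⟨H, hH, hHle⟩ := hK.exists_supportFun_gradient_le h0 hL
  set c := volumeRadius volume K ^ (m - 1) * volumeRadius volume L
  let error (ε : ℝ) : ℝ≥0∞ := ENNReal.ofReal H * (ENNReal.ofReal ((1 + ε * H) ^ m - 1) * volume K)
  have hle : ∀ ε > 0, ENNReal.ofReal c ≤ mixedVol K L + error ε := by
    intro ε hε
    have h := hK.le_lintegral_hatVariation h0 hL hε
    rw [← lintegral_add_compl _ hK.measurableSet] at h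
    grw [hK.setLIntegral_hatVariation_le h0 hL hL0 hε.le,
      hK.setLIntegral_compl_hatVariation_le h0 hε.le hH hHle] at h
    rw [add_assoc, ENNReal.add_le_add_iff_left
      (ENNReal.mul_ne_top ENNReal.ofReal_ne_top hK.volume_ne_top), ENNReal.ofReal_mul hε.le,
      ENNReal.ofReal_mul hε.le, mul_assoc, ← mul_add] at h
    exact (ENNReal.mul_le_mul_iff_right (ENNReal.ofReal_pos.2 hε).ne' ENNReal.ofReal_ne_top).1 h
  have hlim : Filter.Tendsto (fun ε ↦ mixedVol K L + error ε) (𝓝[>] 0) (𝓝 (mixedVol K L)) := by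
    have hcont : Continuous fun ε ↦ mixedVol K L + error ε := by
      refine continuous_const.add ((ENNReal.continuous_const_mul ENNReal.ofReal_ne_top).comp
        ((ENNReal.continuous_mul_const hK.volume_ne_top).comp
          (ENNReal.continuous_ofReal.comp (by fun_prop))))
    simpa [error] using (hcont.tendsto 0).mono_left nhdsWithin_le_nhds
  exact ge_of_tendsto hlim (eventually_nhdsWithin_of_forall hle)

/-- Minkowski's inequality for `K` and `K + L` turns the assumption into equality in the
Brunn–Minkowski inequality for `K` and `L`. -/
theorem exists_eq_vadd_smul_of_mixedVol_le (hK : IsConvexBody K) (h0 : (0 : Euc m) ∈ interior K)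
    (hL : IsConvexBody L) (hL0 : (0 : Euc m) ∈ L)
    (h : mixedVol K L ≤
      ENNReal.ofReal (volumeRadius volume K ^ (m - 1) * volumeRadius volume L)) :
    ∃ (c : ℝ) (v : Euc m), 0 < c ∧ L = v +ᵥ c • K := by
  have ha := hK.volumeRadius_pos
  have hb := hL.volumeRadius_pos
  have hsum := hK.le_mixedVol h0 (hK.add hL) ⟨0, interior_subset h0, 0, hL0, add_zero 0⟩
  refine hK.exists_eq_vadd_smul_of_volumeRadius_add_le hL ?_
  rw [hK.mixedVol_add hL (interior_subset h0) hL0, hK.mixedVol_self h0,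
    ← hK.ofReal_volumeRadius_pow] at hsum
  grw [h, ← ENNReal.ofReal_add (by positivity) (by positivity)] at hsum
  rw [ENNReal.ofReal_le_ofReal_iff (by positivity), ← pow_sub_one_mul (NeZero.ne m), ← mul_add]
    at hsum
  exact le_of_mul_le_mul_left hsum (by positivity)

end IsConvexBody

/-! ### Cone volumes and surface area -/

/-- A set invariant under multiplication by positive scalars. -/
def IsPosCone {E : Type*} [SMul ℝ E] (Ω : Set E) : Prop :=
  ∀ ⦃c : ℝ⦄, 0 < c → ∀ ⦃x⦄, x ∈ Ω → c • x ∈ Ω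

/-- The volume of a cone in `ℝⁿ⁺¹` of height one over a base of unit `n`-dimensional Hausdorff
measure. The Haar scalar factor corrects for the normalization of `μH[n]`, which is not that of
Lebesgue measure. -/
def coneConst (n : ℕ) : ℝ≥0∞ :=
  ENNReal.ofReal (1 / (n + 1)) * Measure.addHaarScalarFactor (volume : Measure (Euc n)) μH[n]

lemma coneConst_ne_zero (n : ℕ) : coneConst n ≠ 0 := by
  refine mul_ne_zero ?_ (ENNReal.coe_ne_zero.2
    (Measure.addHaarScalarFactor_volume_hausdorffMeasure_ne_zero n))
  rw [ne_eq, ENNReal.ofReal_eq_zero, not_le]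
  positivity

lemma coneConst_mul_hausdorffMeasure {n : ℕ} (E : Set (Euc (n + 1))) :
    coneConst n * μH[n] E = ENNReal.ofReal (1 / (n + 1)) * μHE[n] E := by
  rw [coneConst, mul_assoc, Measure.euclideanHausdorffMeasure_def, Measure.smul_apply,
    ENNReal.smul_def, smul_eq_mul]

lemma IsPosCone.inter_inner_eq {m : ℕ} {Ω : Set (Euc m)} (hΩ : IsPosCone Ω) (a : Euc m) {s : ℝ}
    (hs : 0 < s) : Ω ∩ {x | ⟪a, x⟫ = s} = s • (Ω ∩ {x | ⟪a, x⟫ = 1}) := by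
  ext x
  rw [mem_smul_set_iff_inv_smul_mem₀ hs.ne']
  refine and_congr ⟨fun hx ↦ hΩ (inv_pos.2 hs) hx, fun hx ↦ ?_⟩ ?_
  · simpa only [smul_inv_smul₀ hs.ne'] using hΩ hs hx
  · rw [mem_ofPred_eq, mem_ofPred_eq, inner_smul_right, inv_mul_eq_one₀ hs.ne', eq_comm]

lemma mk'_orthogonal_eq_inner_eq {m : ℕ} {a : Euc m} (ha : a ≠ 0) (s : ℝ) :
    (AffineSubspace.mk' (s • ((‖a‖ ^ 2)⁻¹ • a) +ᵥ (0 : Euc m)) (ℝ ∙ ((‖a‖ ^ 2)⁻¹ • a))ᗮ : Set _) =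
      {x | ⟪a, x⟫ = s} := by
  have hnorm : ‖a‖ ^ 2 ≠ 0 := by positivity
  ext x
  rw [SetLike.mem_coe, AffineSubspace.mem_mk', Submodule.mem_orthogonal_singleton_iff_inner_right,
    mem_ofPred_eq, vsub_eq_sub, vadd_eq_add, add_zero, inner_sub_right, real_inner_smul_left,
    real_inner_smul_left, inner_smul_right, inner_smul_right, real_inner_self_eq_norm_sq,
    inv_mul_cancel₀ hnorm, mul_one, ← mul_sub, mul_eq_zero_iff_left (inv_ne_zero hnorm),
    sub_eq_zero]

lemma lintegral_Ioc_pow (k : ℕ) :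
    ∫⁻ t in Ioc (0 : ℝ) 1, ENNReal.ofReal (t ^ k) = ENNReal.ofReal (1 / (k + 1)) := by
  rw [← ofReal_integral_eq_lintegral_ofReal]
  · rw [← intervalIntegral.integral_of_le zero_le_one, integral_pow, one_pow,
      zero_pow k.succ_ne_zero, sub_zero]
  · exact ((by fun_prop : Continuous fun t : ℝ ↦ t ^ k).integrableOn_Icc).mono_set
      Ioc_subset_Icc_self
  · filter_upwards [ae_restrict_mem measurableSet_Ioc] with t ht
    exact pow_nonneg ht.1.le _

lemma IsPosCone.euclideanHausdorffMeasure_inter {n : ℕ} {a : Euc (n + 1)} {Ω : Set (Euc (n + 1))}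
    (hΩ : IsPosCone Ω) (hpos : ∀ x ∈ Ω, 0 < ⟪a, x⟫) (s : ℝ) :
    μHE[n] (Ω ∩ {x | ⟪a, x⟫ ≤ 1} ∩ {x | ⟪a, x⟫ = s}) =
      (Ioc 0 1).indicator (fun s ↦ ENNReal.ofReal (s ^ n) * μHE[n] (Ω ∩ {x | ⟪a, x⟫ = 1})) s := by
  by_cases hs : s ∈ Ioc 0 1
  · have hsub : {x | ⟪a, x⟫ = s} ⊆ {x | ⟪a, x⟫ ≤ 1} := fun x (hx : ⟪a, x⟫ = s) ↦ hx.trans_le hs.2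
    rw [indicator_of_mem hs, inter_assoc, inter_eq_self_of_subset_right hsub,
      hΩ.inter_inner_eq a hs.1, Measure.euclideanHausdorffMeasure_smul₀ n hs.1.ne',
      ENNReal.smul_def, smul_eq_mul, ENNReal.ofReal_pow hs.1.le, ENNReal.coe_pow,
      ← enorm_eq_nnnorm, Real.enorm_of_nonneg hs.1.le]
  · have hempty : Ω ∩ {x | ⟪a, x⟫ ≤ 1} ∩ {x | ⟪a, x⟫ = s} = ∅ := by
      refine eq_empty_of_forall_notMem ?_
      rintro x ⟨⟨hx, hle⟩, rfl⟩
      exact hs ⟨hpos x hx, hle⟩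
    rw [indicator_of_notMem hs, hempty, measure_empty]

lemma IsPosCone.norm_mul_volume_inter {n : ℕ} {a : Euc (n + 1)} {Ω : Set (Euc (n + 1))}
    (hΩ : IsPosCone Ω) (hmeas : MeasurableSet Ω) (hpos : ∀ x ∈ Ω, 0 < ⟪a, x⟫) :
    ‖a‖ₑ * volume (Ω ∩ {x | ⟪a, x⟫ ≤ 1}) = coneConst n * μH[n] (Ω ∩ {x | ⟪a, x⟫ = 1}) := by
  rcases eq_or_ne a 0 with rfl | ha
  · have hempty : Ω = ∅ := eq_empty_of_forall_notMem fun x hx ↦ by simpa using hpos x hx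
    simp only [hempty, empty_inter, measure_empty, mul_zero]
  have hv : (‖a‖ ^ 2)⁻¹ • a ≠ 0 := smul_ne_zero (by positivity) ha
  have hvol := EuclideanGeometry.euclideanHausdorffMeasure_eq_lintegral (0 : Euc (n + 1)) hv
    (hmeas.inter (measurableSet_le (by fun_prop) measurable_const :
      MeasurableSet {x : Euc (n + 1) | ⟪a, x⟫ ≤ 1}))
  simp_rw [finrank_euclideanSpace_fin, mk'_orthogonal_eq_inner_eq ha, add_tsub_cancel_right,
    hΩ.euclideanHausdorffMeasure_inter hpos] at hvol
  rw [EuclideanSpace.euclideanHausdorffMeasure_eq_volume, lintegral_indicator measurableSet_Ioc,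
    lintegral_mul_const _ (by fun_prop), lintegral_Ioc_pow] at hvol
  have hnorm : ‖a‖ₑ * ‖(‖a‖ ^ 2)⁻¹ • a‖ₑ = 1 := by
    rw [← ofReal_norm, ← ofReal_norm, ← ENNReal.ofReal_mul (norm_nonneg _), norm_smul, norm_inv,
      norm_pow, norm_norm, ← ENNReal.ofReal_one]
    congr 1
    have := norm_ne_zero_iff.2 ha
    field_simp
  rw [hvol, ← mul_assoc, hnorm, one_mul, coneConst_mul_hausdorffMeasure]

/-- The radial projection from the origin onto the boundary of `K`. -/
def radialProj {E : Type*} [AddCommGroup E] [Module ℝ E] (K : Set E) (x : E) : E :=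
  (gauge K x)⁻¹ • x

/-- The central projection from the origin onto the hyperplane `⟪a, x⟫ = 1`. -/
def centralProj {E : Type*} [NormedAddCommGroup E] [InnerProductSpace ℝ E] (a x : E) : E :=
  ⟪a, x⟫⁻¹ • x

section Projections
variable {E : Type*} [NormedAddCommGroup E] [InnerProductSpace ℝ E] {K S : Set E} {a x y : E}

lemma radialProj_smul (K : Set E) {c : ℝ} (hc : 0 < c) (x : E) :
    radialProj K (c • x) = radialProj K x := by
  rw [radialProj, radialProj, gauge_smul_of_nonneg hc.le, smul_smul, smul_eq_mul, mul_inv,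
    mul_right_comm, inv_mul_cancel₀ hc.ne', one_mul]

lemma gauge_pos_of_gauge_radialProj (hx : gauge K (radialProj K x) = 1) : 0 < gauge K x := by
  refine (gauge_nonneg x).lt_of_ne fun h ↦ ?_
  rw [radialProj, ← h, inv_zero, zero_smul, gauge_zero] at hx
  exact zero_ne_one hx

lemma gauge_smul_radialProj (hx : 0 < gauge K x) : gauge K x • radialProj K x = x := by
  rw [radialProj, smul_inv_smul₀ hx.ne']

lemma inner_eq_gauge_mul (hx : 0 < gauge K x) (a : E) :
    ⟪a, x⟫ = gauge K x * ⟪a, radialProj K x⟫ := by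
  rw [← inner_smul_right, gauge_smul_radialProj hx]

lemma radialProj_centralProj (hx : gauge K x = 1) (hpos : 0 < ⟪a, x⟫) :
    radialProj K (centralProj a x) = x := by
  rw [centralProj, radialProj_smul K (inv_pos.2 hpos), radialProj, hx, inv_one, one_smul]

lemma isPosCone_preimage_radialProj (K S : Set E) : IsPosCone (radialProj K ⁻¹' S) :=
  fun c hc x hx ↦ by rwa [mem_preimage, radialProj_smul K hc]

lemma inner_pos_of_radialProj_mem (hS : ∀ x ∈ S, gauge K x = 1) (hpos : ∀ x ∈ S, 0 < ⟪a, x⟫)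
    (hx : radialProj K x ∈ S) : 0 < ⟪a, x⟫ := by
  have hgauge := gauge_pos_of_gauge_radialProj (hS _ hx)
  rw [inner_eq_gauge_mul hgauge]
  exact mul_pos hgauge (hpos _ hx)

lemma preimage_radialProj_inter_inner_eq_one (hS : ∀ x ∈ S, gauge K x = 1)
    (hpos : ∀ x ∈ S, 0 < ⟪a, x⟫) :
    radialProj K ⁻¹' S ∩ {x | ⟪a, x⟫ = 1} = centralProj a '' S := by
  ext x
  constructor
  · rintro ⟨hx, hx1 : ⟪a, x⟫ = 1⟩
    have hgauge := gauge_pos_of_gauge_radialProj (hS _ hx)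
    refine ⟨_, hx, ?_⟩
    rw [inner_eq_gauge_mul hgauge] at hx1
    rw [centralProj, inv_eq_of_mul_eq_one_left hx1, gauge_smul_radialProj hgauge]
  · rintro ⟨y, hy, rfl⟩
    refine ⟨by rwa [mem_preimage, radialProj_centralProj (hS y hy) (hpos y hy)], ?_⟩
    rw [mem_ofPred_eq, centralProj, inner_smul_right, inv_mul_cancel₀ (hpos y hy).ne']

lemma image_radialProj_image_centralProj (hS : ∀ x ∈ S, gauge K x = 1)
    (hpos : ∀ x ∈ S, 0 < ⟪a, x⟫) : radialProj K '' (centralProj a '' S) = S := by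
  rw [image_image]
  exact (image_congr fun x hx ↦ radialProj_centralProj (hS x hx) (hpos x hx)).trans (image_id' S)

lemma inner_mul_inner_mul_dist_centralProj (hx : 0 < ⟪a, x⟫) (hy : 0 < ⟪a, y⟫) :
    ⟪a, x⟫ * ⟪a, y⟫ * dist (centralProj a x) (centralProj a y) =
      ‖⟪a, y⟫ • (x - y) - ⟪a, x - y⟫ • y‖ := by
  rw [dist_eq_norm, ← abs_of_pos (mul_pos hx hy), ← Real.norm_eq_abs, ← norm_smul, centralProj,
    centralProj, smul_sub, smul_smul, smul_smul, inner_sub_right,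
    mul_right_comm, mul_inv_cancel₀ hx.ne', one_mul, mul_inv_cancel_right₀ hy.ne']
  congr 1
  module

end Projections

lemma hasFDerivAt_gauge_smul {E : Type*} [NormedAddCommGroup E] [NormedSpace ℝ E] {K : Set E}
    {x : E} {f' : E →L[ℝ] ℝ} {c : ℝ} (hc : 0 < c) (hx : HasFDerivAt (gauge K) f' x) :
    HasFDerivAt (gauge K) f' (c • x) := by
  have hscale : HasFDerivAt (fun y : E ↦ c⁻¹ • y) (c⁻¹ • ContinuousLinearMap.id ℝ E) (c • x) :=
    (hasFDerivAt_id _).const_smul c⁻¹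
  have hx' : HasFDerivAt (gauge K) f' (c⁻¹ • c • x) := by rwa [inv_smul_smul₀ hc.ne']
  refine (((hx'.comp (c • x) hscale).const_mul c).congr_fderiv ?_).congr_of_eventuallyEq
    (.of_forall fun y ↦ ?_)
  · rw [ContinuousLinearMap.comp_smul, ContinuousLinearMap.comp_id, smul_inv_smul₀ hc.ne']
  · change gauge K y = c * gauge K (c⁻¹ • y)
    rw [gauge_smul_of_nonneg (inv_pos.2 hc).le, smul_eq_mul, mul_inv_cancel_left₀ hc.ne']

/-- The points of the boundary of `K` at which the gauge of `K` is differentiable. -/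
def regularFrontier {m : ℕ} (K : Set (Euc m)) : Set (Euc m) :=
  {x | gauge K x = 1 ∧ DifferentiableAt ℝ (gauge K) x}

/-- The cone volume measure of `K`, weighted by the norm of the gradient of the gauge: in polar
coordinates adapted to `K` it is `coneConst` times the surface measure on the boundary of `K`. -/
def coneMeasure {m : ℕ} (K : Set (Euc m)) : Measure (Euc m) :=
  ((volume.restrict K).withDensity fun x ↦ ‖gradient (gauge K) x‖ₑ).map (radialProj K)

/-- On `S`, a part of the boundary of `K`, the geometry agrees up to factors `θ` with that of the
hyperplane `⟪a, x⟫ = 1`, to which `S` is compared by the central projection. -/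
structure IsNearlyFlat {m : ℕ} (K : Set (Euc m)) (θ : NNReal) (a : Euc m) (S : Set (Euc m)) :
    Prop where
  one_le_inner : ∀ x ∈ S, 1 ≤ θ * ⟪a, x⟫
  inner_le : ∀ x ∈ S, ⟪a, x⟫ ≤ θ
  enorm_le : ∀ x ∈ S, ‖a‖ₑ ≤ θ * ‖gradient (gauge K) x‖ₑ
  enorm_gradient_le : ∀ x ∈ S, ‖gradient (gauge K) x‖ₑ ≤ θ * ‖a‖ₑ
  lipschitzOnWith_centralProj : LipschitzOnWith θ (centralProj a) S
  lipschitzOnWith_radialProj : LipschitzOnWith θ (radialProj K) (centralProj a '' S)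

lemma gradient_gauge_radialProj {m : ℕ} {K : Set (Euc m)} {x : Euc m}
    (hx : radialProj K x ∈ regularFrontier K) :
    gradient (gauge K) (radialProj K x) = gradient (gauge K) x := by
  have hpos := gauge_pos_of_gauge_radialProj hx.1
  have h := hasFDerivAt_gauge_smul hpos hx.2.hasFDerivAt
  rw [gauge_smul_radialProj hpos] at h
  rw [gradient, gradient, h.fderiv]

namespace IsConvexBody

section Measurability
variable {m : ℕ} {K S : Set (Euc m)}

lemma measurable_radialProj (hK : IsConvexBody K) (h0 : (0 : Euc m) ∈ interior K) :
    Measurable (radialProj K) :=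
  (hK.continuous_gauge h0).measurable.inv.smul measurable_id

lemma coneMeasure_apply (hK : IsConvexBody K) (h0 : (0 : Euc m) ∈ interior K)
    (hS : MeasurableSet S) :
    coneMeasure K S = ∫⁻ x in K ∩ radialProj K ⁻¹' S, ‖gradient (gauge K) x‖ₑ := by
  have hpre := hK.measurable_radialProj h0 hS
  rw [coneMeasure, Measure.map_apply (hK.measurable_radialProj h0) hS, withDensity_apply _ hpre,
    Measure.restrict_restrict hpre, inter_comm]

end Measurability

variable {n : ℕ} {K S : Set (Euc (n + 1))} {θ C : NNReal} {a : Euc (n + 1)}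

lemma volume_preimage_radialProj_inter_le (hK : IsConvexBody K) (h0 : 0 ∈ interior K)
    (hgauge : ∀ x ∈ S, gauge K x = 1) (ha : ∀ x ∈ S, 1 ≤ θ * ⟪a, x⟫) :
    volume (radialProj K ⁻¹' S ∩ {x | ⟪a, x⟫ ≤ 1}) ≤
      θ ^ (n + 1) * volume (K ∩ radialProj K ⁻¹' S) := by
  have hsub : radialProj K ⁻¹' S ∩ {x | ⟪a, x⟫ ≤ 1} ⊆ (θ : ℝ) • (K ∩ radialProj K ⁻¹' S) := by
    rintro x ⟨hx, hx1 : ⟪a, x⟫ ≤ 1⟩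
    have hθ : (0 : ℝ) < θ := θ.coe_nonneg.lt_of_ne fun h ↦ by
      have := ha _ hx
      rw [← h, zero_mul] at this
      exact zero_lt_one.not_ge this
    rw [inner_eq_gauge_mul (gauge_pos_of_gauge_radialProj (hgauge _ hx))] at hx1
    rw [mem_smul_set_iff_inv_smul_mem₀ hθ.ne']
    refine ⟨?_, isPosCone_preimage_radialProj K S (inv_pos.2 hθ) hx⟩
    rw [← hK.gauge_le_one_iff h0, gauge_smul_of_nonneg (inv_pos.2 hθ).le, smul_eq_mul,
      inv_mul_le_iff₀ hθ]
    nlinarith [ha _ hx, gauge_nonneg (s := K) x]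
  refine (measure_mono hsub).trans_eq ?_
  rw [Measure.addHaar_smul_of_nonneg _ θ.coe_nonneg, finrank_euclideanSpace_fin,
    ENNReal.ofReal_pow θ.coe_nonneg, ENNReal.ofReal_coe_nnreal]

lemma volume_inter_preimage_radialProj_le (hK : IsConvexBody K) (h0 : 0 ∈ interior K)
    (hgauge : ∀ x ∈ S, gauge K x = 1) (hpos : ∀ x ∈ S, 0 < ⟪a, x⟫) (ha : ∀ x ∈ S, ⟪a, x⟫ ≤ θ) :
    volume (K ∩ radialProj K ⁻¹' S) ≤
      θ ^ (n + 1) * volume (radialProj K ⁻¹' S ∩ {x | ⟪a, x⟫ ≤ 1}) := by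
  have hsub : K ∩ radialProj K ⁻¹' S ⊆ (θ : ℝ) • (radialProj K ⁻¹' S ∩ {x | ⟪a, x⟫ ≤ 1}) := by
    rintro x ⟨hxK, hx⟩
    have hθ : (0 : ℝ) < θ := (hpos _ hx).trans_le (ha _ hx)
    rw [mem_smul_set_iff_inv_smul_mem₀ hθ.ne']
    refine ⟨isPosCone_preimage_radialProj K S (inv_pos.2 hθ) hx, ?_⟩
    rw [mem_ofPred_eq, inner_smul_right, inv_mul_le_iff₀ hθ, mul_one,
      inner_eq_gauge_mul (gauge_pos_of_gauge_radialProj (hgauge _ hx))]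
    exact (mul_le_of_le_one_left (hpos _ hx).le ((hK.gauge_le_one_iff h0).2 hxK)).trans (ha _ hx)
  refine (measure_mono hsub).trans_eq ?_
  rw [Measure.addHaar_smul_of_nonneg _ θ.coe_nonneg, finrank_euclideanSpace_fin,
    ENNReal.ofReal_pow θ.coe_nonneg, ENNReal.ofReal_coe_nnreal]

lemma enorm_mul_volume_preimage_radialProj (hK : IsConvexBody K) (h0 : 0 ∈ interior K)
    (hS : MeasurableSet S) (hgauge : ∀ x ∈ S, gauge K x = 1) (hpos : ∀ x ∈ S, 0 < ⟪a, x⟫) :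
    ‖a‖ₑ * volume (radialProj K ⁻¹' S ∩ {x | ⟪a, x⟫ ≤ 1}) =
      coneConst n * μH[n] (centralProj a '' S) := by
  rw [(isPosCone_preimage_radialProj K S).norm_mul_volume_inter (hK.measurable_radialProj h0 hS)
    fun x hx ↦ inner_pos_of_radialProj_mem hgauge hpos hx,
    preimage_radialProj_inter_inner_eq_one hgauge hpos]

lemma coneConst_mul_hausdorffMeasure_le_enorm_mul_volume (hK : IsConvexBody K) (h0 : 0 ∈ interior K)
    (hS : MeasurableSet S) (hgauge : ∀ x ∈ S, gauge K x = 1) (ha : ∀ x ∈ S, 1 ≤ θ * ⟪a, x⟫)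
    (hLip : LipschitzOnWith C (radialProj K) (centralProj a '' S)) :
    coneConst n * μH[n] S ≤
      C ^ n * θ ^ (n + 1) * (‖a‖ₑ * volume (K ∩ radialProj K ⁻¹' S)) := by
  have hpos : ∀ x ∈ S, 0 < ⟪a, x⟫ := fun x hx ↦
    pos_of_mul_pos_right (zero_lt_one.trans_le (ha x hx)) θ.coe_nonneg
  have himage := hLip.hausdorffMeasure_image_le (d := n) n.cast_nonneg
  rw [image_radialProj_image_centralProj hgauge hpos, ENNReal.rpow_natCast] at himage
  calc coneConst n * μH[n] S ≤ coneConst n * (C ^ n * μH[n] (centralProj a '' S)) := by gcongr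
    _ = C ^ n * (‖a‖ₑ * volume (radialProj K ⁻¹' S ∩ {x | ⟪a, x⟫ ≤ 1})) := by
        rw [hK.enorm_mul_volume_preimage_radialProj h0 hS hgauge hpos, mul_left_comm]
    _ ≤ C ^ n * (‖a‖ₑ * (θ ^ (n + 1) * volume (K ∩ radialProj K ⁻¹' S))) := by
        grw [hK.volume_preimage_radialProj_inter_le h0 hgauge ha]
    _ = C ^ n * θ ^ (n + 1) * (‖a‖ₑ * volume (K ∩ radialProj K ⁻¹' S)) := by ring

lemma enorm_mul_volume_le_coneConst_mul (hK : IsConvexBody K) (h0 : 0 ∈ interior K)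
    (hS : MeasurableSet S) (hgauge : ∀ x ∈ S, gauge K x = 1) (hpos : ∀ x ∈ S, 0 < ⟪a, x⟫)
    (ha : ∀ x ∈ S, ⟪a, x⟫ ≤ θ) (hLip : LipschitzOnWith C (centralProj a) S) :
    ‖a‖ₑ * volume (K ∩ radialProj K ⁻¹' S) ≤ C ^ n * θ ^ (n + 1) * (coneConst n * μH[n] S) := by
  have himage := hLip.hausdorffMeasure_image_le (d := n) n.cast_nonneg
  rw [ENNReal.rpow_natCast] at himage
  calc ‖a‖ₑ * volume (K ∩ radialProj K ⁻¹' S)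
      ≤ ‖a‖ₑ * (θ ^ (n + 1) * volume (radialProj K ⁻¹' S ∩ {x | ⟪a, x⟫ ≤ 1})) := by
        grw [hK.volume_inter_preimage_radialProj_le h0 hgauge hpos ha]
    _ = θ ^ (n + 1) * (coneConst n * μH[n] (centralProj a '' S)) := by
        rw [← hK.enorm_mul_volume_preimage_radialProj h0 hS hgauge hpos, mul_left_comm]
    _ ≤ θ ^ (n + 1) * (coneConst n * (C ^ n * μH[n] S)) := by gcongr
    _ = C ^ n * θ ^ (n + 1) * (coneConst n * μH[n] S) := by ring

end IsConvexBody

namespace IsNearlyFlat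
variable {n : ℕ} {K S : Set (Euc (n + 1))} {θ : NNReal} {a : Euc (n + 1)}

lemma coneConst_mul_hausdorffMeasure_le (h : IsNearlyFlat K θ a S) (hK : IsConvexBody K)
    (h0 : 0 ∈ interior K) (hS : MeasurableSet S) (hreg : S ⊆ regularFrontier K) :
    coneConst n * μH[n] S ≤ θ ^ (2 * n + 2) * coneMeasure K S := by
  have hweight : ‖a‖ₑ * volume (K ∩ radialProj K ⁻¹' S) ≤ θ * coneMeasure K S := by
    rw [hK.coneMeasure_apply h0 hS, ← lintegral_const_mul' _ _ ENNReal.coe_ne_top,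
      ← setLIntegral_const]
    refine setLIntegral_mono' (hK.measurableSet.inter (hK.measurable_radialProj h0 hS))
      fun x hx ↦ ?_
    rw [← gradient_gauge_radialProj (hreg hx.2)]
    exact h.enorm_le _ hx.2
  grw [hK.coneConst_mul_hausdorffMeasure_le_enorm_mul_volume h0 hS (fun x hx ↦ (hreg hx).1)
    h.one_le_inner h.lipschitzOnWith_radialProj, hweight]
  exact (by ring : _ = _).le

lemma coneMeasure_le (h : IsNearlyFlat K θ a S) (hK : IsConvexBody K)
    (h0 : 0 ∈ interior K) (hS : MeasurableSet S) (hreg : S ⊆ regularFrontier K) :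
    coneMeasure K S ≤ θ ^ (2 * n + 2) * (coneConst n * μH[n] S) := by
  have hpos : ∀ x ∈ S, 0 < ⟪a, x⟫ := fun x hx ↦
    pos_of_mul_pos_right (zero_lt_one.trans_le (h.one_le_inner x hx)) θ.coe_nonneg
  have hweight : coneMeasure K S ≤ θ * (‖a‖ₑ * volume (K ∩ radialProj K ⁻¹' S)) := by
    rw [hK.coneMeasure_apply h0 hS, ← setLIntegral_const,
      ← lintegral_const_mul' _ _ ENNReal.coe_ne_top]
    refine setLIntegral_mono' (hK.measurableSet.inter (hK.measurable_radialProj h0 hS))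
      fun x hx ↦ ?_
    rw [← gradient_gauge_radialProj (hreg hx.2)]
    exact h.enorm_gradient_le _ hx.2
  grw [hweight, hK.enorm_mul_volume_le_coneConst_mul h0 hS (fun x hx ↦ (hreg hx).1) hpos
    h.inner_le h.lipschitzOnWith_centralProj]
  exact (by ring : _ = _).le

end IsNearlyFlat

lemma exists_pos_one_add_sq_le {θ : ℝ} (hθ : 1 < θ) : ∃ τ > 0, (1 + τ) ^ 2 ≤ θ * (1 - 2 * τ) := by
  have hden : 0 < 2 * θ + 3 := by linarith
  refine ⟨(θ - 1) / (2 * θ + 3), div_pos (by linarith) hden, ?_⟩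
  have hmul : (θ - 1) / (2 * θ + 3) * (2 * θ + 3) = θ - 1 := div_mul_cancel₀ _ hden.ne'
  have hpos : 0 < (θ - 1) / (2 * θ + 3) := div_pos (by linarith) hden
  nlinarith

lemma le_of_forall_one_lt_le_pow_mul {X Y : ℝ≥0∞} (k : ℕ)
    (h : ∀ θ : NNReal, 1 < θ → X ≤ θ ^ k * Y) : X ≤ Y := by
  have hlim : Filter.Tendsto (fun θ : NNReal ↦ (θ : ℝ≥0∞) ^ k * Y) (𝓝[>] 1) (𝓝 (1 ^ k * Y)) := by
    refine ENNReal.Tendsto.mul_const ?_ (.inl (pow_ne_zero k one_ne_zero))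
    exact (((ENNReal.continuous_pow k).comp ENNReal.continuous_coe).tendsto 1).mono_left
      nhdsWithin_le_nhds
  rw [one_pow, one_mul] at hlim
  exact ge_of_tendsto hlim (eventually_mem_nhdsWithin.mono h)

lemma enorm_le_coe_mul_enorm {E : Type*} [SeminormedAddGroup E] {x y : E} {θ : NNReal}
    (h : ‖x‖ ≤ θ * ‖y‖) : ‖x‖ₑ ≤ θ * ‖y‖ₑ := by
  rw [enorm_eq_nnnorm, enorm_eq_nnnorm]
  exact_mod_cast h

lemma measure_le_of_countable_cover {X : Type*} [MeasurableSpace X] {μ ν : Measure X}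
    {s S : Set X} {t : ℕ → Set X} (ht : ∀ i, MeasurableSet (t i)) (hs : s ⊆ ⋃ i, t i)
    (h : ∀ i S, MeasurableSet S → S ⊆ s ∩ t i → μ S ≤ ν S) (hS : MeasurableSet S) (hSs : S ⊆ s) :
    μ S ≤ ν S := by
  have hcover : S = ⋃ i, S ∩ disjointed t i := by
    rw [← inter_iUnion, iUnion_disjointed, inter_eq_left.2 (hSs.trans hs)]
  have hdisj : Pairwise (Function.onFun Disjoint fun i ↦ S ∩ disjointed t i) := fun i j hij ↦
    (disjoint_disjointed t hij).mono inter_subset_right inter_subset_right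
  have hmeas : ∀ i, MeasurableSet (S ∩ disjointed t i) := fun i ↦
    hS.inter (MeasurableSet.disjointed ht i)
  rw [hcover, measure_iUnion hdisj hmeas, measure_iUnion hdisj hmeas]
  exact ENNReal.tsum_le_tsum fun i ↦ h i _ (hmeas i)
    fun x hx ↦ ⟨hSs hx.1, disjointed_subset t i hx.2⟩

section NearlyFlat
variable {m : ℕ} {K S : Set (Euc m)} {a x y : Euc m} {R τ : ℝ} {θ : NNReal}

lemma inner_gradient_gauge_self (hx : x ∈ regularFrontier K) : ⟪x, gradient (gauge K) x⟫ = 1 := by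
  rw [inner_gradient, fderiv_gauge_self hx.2, hx.1]

lemma one_le_mul_norm_gradient_gauge (hx : x ∈ regularFrontier K) (hR : ‖x‖ ≤ R) :
    1 ≤ R * ‖gradient (gauge K) x‖ := by
  rw [← inner_gradient_gauge_self hx]
  grw [real_inner_le_norm, hR]

lemma abs_inner_sub_one_le (hx : x ∈ regularFrontier K) (hR : ‖x‖ ≤ R)
    (ha : ‖gradient (gauge K) x - a‖ * R ≤ τ) : |⟪a, x⟫ - 1| ≤ τ := by
  rw [← inner_gradient_gauge_self hx, real_inner_comm x a, ← inner_sub_right]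
  grw [abs_real_inner_le_norm, norm_sub_rev, hR, mul_comm, ha]

lemma norm_gradient_gauge_sub_le (hx : x ∈ regularFrontier K) (hR : ‖x‖ ≤ R)
    (ha : ‖gradient (gauge K) x - a‖ * R ≤ τ) :
    ‖gradient (gauge K) x - a‖ ≤ τ * ‖gradient (gauge K) x‖ := by
  calc ‖gradient (gauge K) x - a‖
      ≤ ‖gradient (gauge K) x - a‖ * (R * ‖gradient (gauge K) x‖) :=
        le_mul_of_one_le_right (norm_nonneg _) (one_le_mul_norm_gradient_gauge hx hR)
    _ ≤ τ * ‖gradient (gauge K) x‖ := by rw [← mul_assoc]; gcongr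

lemma dist_centralProj_le (hθ : (1 + τ) ^ 2 ≤ θ * (1 - 2 * τ)) (hx : |⟪a, x⟫ - 1| ≤ τ)
    (hy : |⟪a, y⟫ - 1| ≤ τ) (hR : ‖y‖ ≤ R) (hxy : |⟪a, x - y⟫| * R ≤ τ * ‖x - y‖) :
    dist (centralProj a x) (centralProj a y) ≤ θ * dist x y := by
  have hτ0 : 0 ≤ τ := (abs_nonneg _).trans hx
  have hτ : 0 < 1 - 2 * τ := pos_of_mul_pos_right (by nlinarith) θ.coe_nonneg
  rw [abs_le] at hx hy
  have hprod : 1 - 2 * τ ≤ ⟪a, x⟫ * ⟪a, y⟫ := by nlinarith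
  refine le_of_mul_le_mul_left ?_ hτ
  calc (1 - 2 * τ) * dist (centralProj a x) (centralProj a y)
      ≤ ⟪a, x⟫ * ⟪a, y⟫ * dist (centralProj a x) (centralProj a y) := by gcongr
    _ = ‖⟪a, y⟫ • (x - y) - ⟪a, x - y⟫ • y‖ :=
        inner_mul_inner_mul_dist_centralProj (by linarith) (by linarith)
    _ ≤ (1 + τ) * ‖x - y‖ + τ * ‖x - y‖ := by
        refine (norm_sub_le _ _).trans (add_le_add ?_ ?_)
        · rw [norm_smul, Real.norm_eq_abs, abs_of_nonneg (by linarith)]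
          gcongr
          linarith
        · rw [norm_smul, Real.norm_eq_abs]
          exact (mul_le_mul_of_nonneg_left hR (abs_nonneg _)).trans hxy
    _ ≤ (1 + τ) ^ 2 * ‖x - y‖ := by
        rw [← add_mul]
        gcongr
        nlinarith
    _ ≤ θ * (1 - 2 * τ) * ‖x - y‖ := by gcongr
    _ = (1 - 2 * τ) * (θ * dist x y) := by rw [dist_eq_norm]; ring

lemma dist_le_mul_dist_centralProj (hθ : (1 + τ) ^ 2 ≤ θ * (1 - 2 * τ)) (hx : |⟪a, x⟫ - 1| ≤ τ)
    (hy : |⟪a, y⟫ - 1| ≤ τ) (hR : ‖y‖ ≤ R) (hxy : |⟪a, x - y⟫| * R ≤ τ * ‖x - y‖) :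
    dist x y ≤ θ * dist (centralProj a x) (centralProj a y) := by
  have hτ0 : 0 ≤ τ := (abs_nonneg _).trans hx
  have hτ : 0 < 1 - 2 * τ := pos_of_mul_pos_right (by nlinarith) θ.coe_nonneg
  rw [abs_le] at hx hy
  have hax : 0 < ⟪a, x⟫ := by linarith
  have hay : 0 < ⟪a, y⟫ := by linarith
  have hprod : ⟪a, x⟫ * ⟪a, y⟫ ≤ (1 + τ) ^ 2 := by nlinarith
  refine le_of_mul_le_mul_left ?_ hτ
  calc (1 - 2 * τ) * dist x y = (1 - τ) * ‖x - y‖ - τ * ‖x - y‖ := by rw [dist_eq_norm]; ring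
    _ ≤ ‖⟪a, y⟫ • (x - y)‖ - ‖⟪a, x - y⟫ • y‖ := by
        refine sub_le_sub ?_ ?_
        · rw [norm_smul, Real.norm_eq_abs, abs_of_pos hay]
          gcongr
          linarith
        · rw [norm_smul, Real.norm_eq_abs]
          exact (mul_le_mul_of_nonneg_left hR (abs_nonneg _)).trans hxy
    _ ≤ ‖⟪a, y⟫ • (x - y) - ⟪a, x - y⟫ • y‖ := norm_sub_norm_le _ _
    _ = ⟪a, x⟫ * ⟪a, y⟫ * dist (centralProj a x) (centralProj a y) :=
        (inner_mul_inner_mul_dist_centralProj hax hay).symm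
    _ ≤ θ * (1 - 2 * τ) * dist (centralProj a x) (centralProj a y) :=
        mul_le_mul_of_nonneg_right (hprod.trans hθ) dist_nonneg
    _ = (1 - 2 * τ) * (θ * dist (centralProj a x) (centralProj a y)) := by ring

lemma isNearlyFlat_of_gradient_near (hreg : S ⊆ regularFrontier K) (hR : ∀ x ∈ S, ‖x‖ ≤ R)
    (hτ0 : 0 ≤ τ) (hθ : (1 + τ) ^ 2 ≤ θ * (1 - 2 * τ))
    (hgrad : ∀ x ∈ S, ‖gradient (gauge K) x - a‖ * R ≤ τ)
    (hflat : ∀ x ∈ S, ∀ y ∈ S, |⟪a, x - y⟫| * R ≤ τ * ‖x - y‖) : IsNearlyFlat K θ a S := by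
  have hinner : ∀ x ∈ S, |⟪a, x⟫ - 1| ≤ τ := fun x hx ↦
    abs_inner_sub_one_le (hreg hx) (hR x hx) (hgrad x hx)
  have hnorm : ∀ x ∈ S, ‖gradient (gauge K) x - a‖ ≤ τ * ‖gradient (gauge K) x‖ := fun x hx ↦
    norm_gradient_gauge_sub_le (hreg hx) (hR x hx) (hgrad x hx)
  have hτ : 0 < 1 - 2 * τ := pos_of_mul_pos_right (by nlinarith) θ.coe_nonneg
  have hθ_inv : 1 ≤ θ * (1 - τ) := by nlinarith
  have hθ_le : 1 + τ ≤ θ := by nlinarith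
  have hpos : ∀ x ∈ S, 0 < ⟪a, x⟫ := fun x hx ↦ by linarith [(abs_le.1 (hinner x hx)).1]
  refine ⟨fun x hx ↦ ?_, fun x hx ↦ ?_, fun x hx ↦ ?_, fun x hx ↦ ?_, ?_, ?_⟩
  · exact hθ_inv.trans (by gcongr; linarith [(abs_le.1 (hinner x hx)).1])
  · linarith [(abs_le.1 (hinner x hx)).2]
  · refine enorm_le_coe_mul_enorm ?_
    have := norm_sub_norm_le a (gradient (gauge K) x)
    rw [norm_sub_rev] at this
    nlinarith [hnorm x hx, norm_nonneg (gradient (gauge K) x)]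
  · refine enorm_le_coe_mul_enorm ?_
    have hlower : (1 - τ) * ‖gradient (gauge K) x‖ ≤ ‖a‖ := by
      linarith [hnorm x hx, norm_sub_norm_le (gradient (gauge K) x) a]
    calc ‖gradient (gauge K) x‖ ≤ θ * (1 - τ) * ‖gradient (gauge K) x‖ :=
          le_mul_of_one_le_left (norm_nonneg _) hθ_inv
      _ ≤ θ * ‖a‖ := by rw [mul_assoc]; gcongr
  · exact .of_dist_le_mul fun x hx y hy ↦
      dist_centralProj_le hθ (hinner x hx) (hinner y hy) (hR y hy) (hflat x hx y hy)
  · refine .of_dist_le_mul ?_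
    rintro _ ⟨x, hx, rfl⟩ _ ⟨y, hy, rfl⟩
    rw [radialProj_centralProj (hreg hx).1 (hpos x hx),
      radialProj_centralProj (hreg hy).1 (hpos y hy)]
    exact dist_le_mul_dist_centralProj hθ (hinner x hx) (hinner y hy) (hR y hy) (hflat x hx y hy)

lemma isNearlyFlat_of_approximatesLinearOn (hreg : S ⊆ regularFrontier K) (hR0 : 0 < R)
    (hR : ∀ x ∈ S, ‖x‖ ≤ R) (hτ0 : 0 ≤ τ) (hθ : (1 + τ) ^ 2 ≤ θ * (1 - 2 * τ))
    (hgrad : ∀ y ∈ S, dist (gradient (gauge K) y) (gradient (gauge K) x) ≤ τ / R)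
    (happrox : ApproximatesLinearOn (gauge K) (fderiv ℝ (gauge K) x) S (τ / R).toNNReal) :
    IsNearlyFlat K θ (gradient (gauge K) x) S := by
  refine isNearlyFlat_of_gradient_near hreg hR hτ0 hθ (fun y hy ↦ ?_) fun y hy z hz ↦ ?_
  · rw [← le_div_iff₀ hR0, ← dist_eq_norm]
    exact hgrad y hy
  · have := happrox y hy z hz
    rwa [(hreg hy).1, (hreg hz).1, sub_self, zero_sub, norm_neg, ← inner_gradient,
      real_inner_comm, Real.norm_eq_abs, Real.coe_toNNReal _ (by positivity), div_mul_eq_mul_div,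
      le_div_iff₀ hR0] at this

end NearlyFlat

lemma IsConvexBody.regularFrontier_subset {m : ℕ} {K : Set (Euc m)} (hK : IsConvexBody K)
    (h0 : 0 ∈ interior K) : regularFrontier K ⊆ K :=
  fun _ hx ↦ (hK.gauge_le_one_iff h0).1 hx.1.le

lemma IsConvexBody.measure_le_of_isNearlyFlat {m : ℕ} {K S : Set (Euc m)} (hK : IsConvexBody K)
    (h0 : 0 ∈ interior K) {θ : NNReal} (hθ : 1 < θ) {μ ν : Measure (Euc m)}
    (h : ∀ a S, MeasurableSet S → S ⊆ regularFrontier K → IsNearlyFlat K θ a S → μ S ≤ ν S)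
    (hS : MeasurableSet S) (hreg : S ⊆ regularFrontier K) : μ S ≤ ν S := by
  obtain ⟨R, hR0, hR⟩ := hK.isCompact.isBounded.exists_pos_norm_le
  obtain ⟨τ, hτ0, hτ⟩ := exists_pos_one_add_sq_le (θ := θ) (by exact_mod_cast hθ)
  have hδ : 0 < τ / R := div_pos hτ0 hR0
  let t j := gradient (gauge K) ⁻¹' Metric.ball (TopologicalSpace.denseSeq (Euc m) j) (τ / R / 2)
  have ht : ∀ j, MeasurableSet (t j) := fun j ↦
    measurable_gradient Metric.isOpen_ball.measurableSet
  have hcover : regularFrontier K ⊆ ⋃ j, t j := fun x _ ↦ by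
    obtain ⟨j, hj⟩ := (TopologicalSpace.denseRange_denseSeq (Euc m)).exists_dist_lt
      (gradient (gauge K) x) (half_pos hδ)
    exact mem_iUnion.2 ⟨j, hj⟩
  refine measure_le_of_countable_cover ht hcover (fun j ↦ ?_) hS hreg
  obtain ⟨s, A, -, hs, hscover, happrox, hA⟩ :=
    exists_partition_approximatesLinearOn_of_hasFDerivWithinAt (gauge K)
      (regularFrontier K ∩ t j) (fderiv ℝ (gauge K))
      (fun x hx ↦ hx.1.2.hasFDerivAt.hasFDerivWithinAt)
      (fun _ ↦ Real.toNNReal (τ / R)) (fun _ ↦ (Real.toNNReal_pos.2 hδ).ne')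
  refine fun T ↦ measure_le_of_countable_cover hs hscover fun i T hT hTs ↦ ?_
  obtain rfl | ⟨z, hz⟩ := T.eq_empty_or_nonempty
  · rw [measure_empty]
    exact zero_le
  obtain ⟨w, hw, hAw⟩ := hA ⟨z, (hTs hz).1⟩ i
  have hTreg : T ⊆ regularFrontier K := fun x hx ↦ (hTs hx).1.1
  have happroxT := (happrox i).mono_set hTs
  rw [hAw] at happroxT
  refine h (gradient (gauge K) w) T hT hTreg (isNearlyFlat_of_approximatesLinearOn hTreg hR0
    (fun x hx ↦ hR x (hK.regularFrontier_subset h0 (hTreg hx))) hτ0.le hτ (fun x hx ↦ ?_) happroxT)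
  have hx : dist (gradient (gauge K) x) _ < _ := (hTs hx).1.2
  have hw : dist (gradient (gauge K) w) _ < _ := hw.2
  linarith [dist_triangle_right (gradient (gauge K) x) (gradient (gauge K) w)
    (TopologicalSpace.denseSeq (Euc m) j)]

namespace IsConvexBody

section Regular
variable {m : ℕ} {K : Set (Euc m)} {x : Euc m}

lemma measurableSet_regularFrontier (hK : IsConvexBody K) (h0 : 0 ∈ interior K) :
    MeasurableSet (regularFrontier K) :=
  (isClosed_eq (hK.continuous_gauge h0) continuous_const).measurableSet.inter
    (measurableSet_of_differentiableAt ℝ _)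

lemma mem_frontier_iff (hK : IsConvexBody K) (h0 : 0 ∈ interior K) :
    x ∈ frontier K ↔ gauge K x = 1 :=
  (gauge_eq_one_iff_mem_frontier hK.convex (mem_interior_iff_mem_nhds.1 h0)).symm

lemma gauge_radialProj (hK : IsConvexBody K) (h0 : 0 ∈ interior K) (hx : x ≠ 0) :
    gauge K (radialProj K x) = 1 := by
  have hpos := hK.gauge_pos h0 hx
  rw [radialProj, gauge_smul_of_nonneg (inv_pos.2 hpos).le, smul_eq_mul, inv_mul_cancel₀ hpos.ne']

lemma norm_radialProj_le (hK : IsConvexBody K) (h0 : 0 ∈ interior K) {R : ℝ} (hR0 : 0 ≤ R)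
    (hR : ∀ y ∈ K, ‖y‖ ≤ R) (x : Euc m) : ‖radialProj K x‖ ≤ R := by
  obtain rfl | hx := eq_or_ne x 0
  · rwa [radialProj, smul_zero, norm_zero]
  · exact hR _ ((hK.gauge_le_one_iff h0).1 (hK.gauge_radialProj h0 hx).le)

lemma exists_lipschitzOnWith_radialProj (hK : IsConvexBody K) (h0 : 0 ∈ interior K) :
    ∃ C, LipschitzOnWith C (radialProj K) {x | 1 / 2 ≤ gauge K x} := by
  obtain ⟨R, hR0, hR⟩ := hK.isCompact.isBounded.exists_pos_norm_le
  obtain ⟨Λ, hΛ⟩ := hK.exists_lipschitzWith_gauge h0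
  refine ⟨Real.toNNReal (2 * (1 + Λ * R)), .of_dist_le_mul fun x hx y hy ↦ ?_⟩
  have hx : 1 / 2 ≤ gauge K x := hx
  have hy : 1 / 2 ≤ gauge K y := hy
  have hsplit : radialProj K x - radialProj K y =
      (gauge K x)⁻¹ • ((x - y) + (gauge K y - gauge K x) • radialProj K y) := by
    rw [sub_smul, gauge_smul_radialProj (by linarith), sub_add_sub_cancel, smul_sub,
      inv_smul_smul₀ (by linarith), radialProj]
  have hinv : (gauge K x)⁻¹ ≤ 2 := by
    rw [inv_le_comm₀ (by linarith) two_pos]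
    linarith
  have hgauge := hΛ.dist_le_mul y x
  rw [Real.dist_eq, dist_comm] at hgauge
  rw [Real.coe_toNNReal _ (by positivity), dist_eq_norm, hsplit, norm_smul, norm_inv,
    Real.norm_eq_abs, abs_of_nonneg (gauge_nonneg x), mul_assoc]
  gcongr
  calc ‖x - y + (gauge K y - gauge K x) • radialProj K y‖
      ≤ ‖x - y‖ + |gauge K y - gauge K x| * ‖radialProj K y‖ := by
        grw [norm_add_le, norm_smul, Real.norm_eq_abs]
    _ ≤ dist x y + Λ * dist x y * R := by
        grw [hgauge, hK.norm_radialProj_le h0 hR0.le hR, dist_eq_norm]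
    _ = (1 + Λ * R) * dist x y := by ring

end Regular

variable {n : ℕ} {K S : Set (Euc (n + 1))}

lemma coneConst_mul_hausdorffMeasure_eq (hK : IsConvexBody K) (h0 : 0 ∈ interior K)
    (hS : MeasurableSet S) (hreg : S ⊆ regularFrontier K) :
    coneConst n * μH[n] S = coneMeasure K S := by
  apply le_antisymm
  · refine le_of_forall_one_lt_le_pow_mul (2 * n + 2) fun θ hθ ↦ ?_
    exact hK.measure_le_of_isNearlyFlat h0 hθ (μ := coneConst n • μH[n])
      (ν := (θ : ℝ≥0∞) ^ (2 * n + 2) • coneMeasure K)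
      (fun a T hT hTreg h ↦ h.coneConst_mul_hausdorffMeasure_le hK h0 hT hTreg) hS hreg
  · refine le_of_forall_one_lt_le_pow_mul (2 * n + 2) fun θ hθ ↦ ?_
    exact hK.measure_le_of_isNearlyFlat h0 hθ (μ := coneMeasure K)
      (ν := (θ : ℝ≥0∞) ^ (2 * n + 2) • (coneConst n • μH[n] : Measure (Euc (n + 1))))
      (fun a T hT hTreg h ↦ h.coneMeasure_le hK h0 hT hTreg) hS hreg

lemma hausdorffMeasure_eq_zero (hK : IsConvexBody K) (h0 : 0 ∈ interior K) (hS : MeasurableSet S)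
    (hgauge : ∀ x ∈ S, gauge K x = 1) (hvol : volume (K ∩ radialProj K ⁻¹' S) = 0) :
    (μH[n] : Measure (Euc (n + 1))) S = 0 := by
  obtain ⟨C, hC⟩ := hK.exists_lipschitzOnWith_radialProj h0
  refine measure_null_of_locally_null S fun x hx ↦ ?_
  have hx0 : x ≠ 0 := by
    rintro rfl
    exact zero_ne_one (gauge_zero.symm.trans (hgauge _ hx))
  let a := (‖x‖ ^ 2)⁻¹ • x
  have hax : ⟪a, x⟫ = 1 := by
    rw [real_inner_smul_left, real_inner_self_eq_norm_sq,
      inv_mul_cancel₀ (pow_ne_zero 2 (norm_ne_zero_iff.2 hx0))]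
  have hopen : IsOpen {y | ⟪a, y⟫ ∈ Ioo (1 / 2) 2} :=
    isOpen_Ioo.preimage (by fun_prop : Continuous fun y ↦ ⟪a, y⟫)
  let T := S ∩ {y | ⟪a, y⟫ ∈ Ioo (1 / 2) 2}
  refine ⟨T, inter_mem_nhdsWithin S (hopen.mem_nhds ?_), ?_⟩
  · rw [mem_ofPred_eq, hax]
    norm_num
  have hmaps : centralProj a '' T ⊆ {y | 1 / 2 ≤ gauge K y} := by
    rintro _ ⟨y, ⟨hy, hy1, hy2⟩, rfl⟩
    have hpos : 0 < ⟪a, y⟫ := by linarith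
    rw [mem_ofPred_eq, centralProj, gauge_smul_of_nonneg (inv_pos.2 hpos).le, hgauge y hy,
      smul_eq_mul, mul_one, one_div, inv_le_inv₀ two_pos hpos]
    exact hy2.le
  have hT : MeasurableSet T := hS.inter hopen.measurableSet
  have hle := hK.coneConst_mul_hausdorffMeasure_le_enorm_mul_volume h0 hT
    (fun y hy ↦ hgauge y hy.1) (θ := 2) (a := a)
    (fun y hy ↦ by have := hy.2.1; push_cast; linarith) (hC.mono hmaps)
  have hvolT : volume (K ∩ radialProj K ⁻¹' T) = 0 :=
    measure_mono_null (inter_subset_inter_right _ (preimage_mono inter_subset_left)) hvol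
  rw [hvolT, mul_zero, mul_zero, nonpos_iff_eq_zero, mul_eq_zero] at hle
  exact hle.resolve_left (coneConst_ne_zero n)

lemma ae_radialProj_mem_regularFrontier (hK : IsConvexBody K) (h0 : 0 ∈ interior K) :
    ∀ᵐ x, radialProj K x ∈ regularFrontier K := by
  filter_upwards [hK.ae_differentiableAt_gauge h0, Measure.ae_ne volume 0] with x hd hx
  exact ⟨hK.gauge_radialProj h0 hx,
    (hasFDerivAt_gauge_smul (inv_pos.2 (hK.gauge_pos h0 hx)) hd.hasFDerivAt).differentiableAt⟩

lemma ae_coneMeasure_mem_regularFrontier (hK : IsConvexBody K) (h0 : 0 ∈ interior K) :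
    ∀ᵐ x ∂coneMeasure K, x ∈ regularFrontier K :=
  (ae_map_iff (hK.measurable_radialProj h0).aemeasurable (hK.measurableSet_regularFrontier h0)).2
    (withDensity_absolutelyContinuous _ _
      (ae_restrict_of_ae (hK.ae_radialProj_mem_regularFrontier h0)))

lemma ae_hausdorffMeasure_mem_regularFrontier (hK : IsConvexBody K) (h0 : 0 ∈ interior K) :
    ∀ᵐ x ∂(μH[n] : Measure (Euc (n + 1))).restrict (frontier K), x ∈ regularFrontier K := by
  rw [ae_restrict_iff' isClosed_frontier.measurableSet, ae_iff]
  refine (congrArg _ ?_).trans (hK.hausdorffMeasure_eq_zero h0 (S := frontier K \ regularFrontier K)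
    (isClosed_frontier.measurableSet.diff (hK.measurableSet_regularFrontier h0))
    (fun x hx ↦ (hK.mem_frontier_iff h0).1 hx.1) (measure_mono_null (fun x hx ↦ hx.2.2)
      (ae_iff.1 (hK.ae_radialProj_mem_regularFrontier h0))))
  ext x
  exact Classical.not_imp

lemma coneConst_smul_hausdorffMeasure_restrict (hK : IsConvexBody K) (h0 : 0 ∈ interior K) :
    coneConst n • (μH[n] : Measure (Euc (n + 1))).restrict (frontier K) = coneMeasure K := by
  have hreg := hK.measurableSet_regularFrontier h0
  have hsub : regularFrontier K ⊆ frontier K := fun x hx ↦ (hK.mem_frontier_iff h0).2 hx.1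
  rw [← Measure.restrict_eq_self_of_ae_mem (hK.ae_coneMeasure_mem_regularFrontier h0),
    ← Measure.restrict_eq_self_of_ae_mem (hK.ae_hausdorffMeasure_mem_regularFrontier h0),
    Measure.restrict_restrict hreg, inter_eq_left.2 hsub]
  ext S hS
  rw [Measure.smul_apply, Measure.restrict_apply hS, Measure.restrict_apply hS, smul_eq_mul,
    hK.coneConst_mul_hausdorffMeasure_eq h0 (hS.inter hreg) inter_subset_right]

end IsConvexBody

lemma measurable_normalize_comp {X : Type*} [MeasurableSpace X] {m : ℕ} {f : X → Euc m}
    (hf : Measurable f) : Measurable fun x ↦ NormedSpace.normalize (f x) :=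
  hf.norm.inv.smul hf

namespace IsConvexBody

section GaussMap
variable {m : ℕ} {K : Set (Euc m)} {x u : Euc m}

lemma inner_le_inner_mul_gauge (hK : IsConvexBody K) (h0 : 0 ∈ interior K)
    (hu : ∀ y ∈ K, ⟪y - x, u⟫ ≤ 0) (y : Euc m) : ⟪y, u⟫ ≤ ⟪x, u⟫ * gauge K y := by
  obtain rfl | hy := eq_or_ne y 0
  · rw [inner_zero_left, gauge_zero, mul_zero]
  have h := hu (radialProj K y) ((hK.gauge_le_one_iff h0).1 (hK.gauge_radialProj h0 hy).le)
  rwa [inner_sub_left, sub_nonpos, radialProj, real_inner_smul_left,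
    inv_mul_le_iff₀ (hK.gauge_pos h0 hy), mul_comm] at h

lemma eq_inner_smul_gradient_gauge (hK : IsConvexBody K) (h0 : 0 ∈ interior K)
    (hx : x ∈ regularFrontier K) (hu : ∀ y ∈ K, ⟪y - x, u⟫ ≤ 0) :
    u = ⟪x, u⟫ • gradient (gauge K) x := by
  have hderiv : HasFDerivAt (fun y ↦ ⟪x, u⟫ * gauge K y - ⟪u, y⟫)
      (⟪x, u⟫ • fderiv ℝ (gauge K) x - innerSL ℝ u) x :=
    (hx.2.hasFDerivAt.const_mul _).sub (innerSL ℝ u).hasFDerivAt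
  have hmin : IsLocalMin (fun y ↦ ⟪x, u⟫ * gauge K y - ⟪u, y⟫) x := by
    refine .of_forall fun y ↦ ?_
    beta_reduce
    rw [hx.1, mul_one, real_inner_comm x u, sub_self, real_inner_comm y u, sub_nonneg]
    exact hK.inner_le_inner_mul_gauge h0 hu y
  refine ext_inner_left ℝ fun y ↦ ?_
  have hzero := DFunLike.congr_fun (hmin.hasFDerivAt_eq_zero hderiv) y
  rw [inner_smul_right, inner_gradient, real_inner_comm]
  exact (sub_eq_zero.1 hzero).symm

lemma eq_normalize_of_isOutwardNormalAt (hK : IsConvexBody K) (h0 : 0 ∈ interior K)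
    (hx : x ∈ regularFrontier K) (hu : IsOutwardNormalAt K x u) :
    u = NormedSpace.normalize (gradient (gauge K) x) := by
  have hpos : 0 ≤ ⟪x, u⟫ := by
    have := hu.2.2 0 (interior_subset h0)
    rwa [zero_sub, inner_neg_left, neg_nonpos] at this
  have heq := hK.eq_inner_smul_gradient_gauge h0 hx hu.2.2
  have hne : ⟪x, u⟫ ≠ 0 := fun h ↦ by
    rw [h, zero_smul] at heq
    exact one_ne_zero (hu.2.1.symm.trans (heq ▸ norm_zero))
  conv_lhs => rw [← NormedSpace.normalize_eq_self_of_norm_eq_one hu.2.1, heq]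
  exact NormedSpace.normalize_smul_of_pos (hpos.lt_of_ne' hne) _

lemma isOutwardNormalAt_normalize (hK : IsConvexBody K) (h0 : 0 ∈ interior K)
    (hx : x ∈ regularFrontier K) :
    IsOutwardNormalAt K x (NormedSpace.normalize (gradient (gauge K) x)) := by
  refine ⟨(hK.mem_frontier_iff h0).2 hx.1, NormedSpace.norm_normalize fun h ↦ ?_, fun y hy ↦ ?_⟩
  · have := inner_gradient_gauge_self hx
    rw [h, inner_zero_right] at this
    exact zero_ne_one this
  · rw [NormedSpace.normalize, inner_smul_right, inner_sub_left, inner_gradient_gauge_self hx,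
      inner_gradient]
    exact mul_nonpos_of_nonneg_of_nonpos (inv_nonneg.2 (norm_nonneg _)) (sub_nonpos.2
      ((hK.fderiv_gauge_le h0 hx.2 y).trans ((hK.gauge_le_one_iff h0).2 hy)))

lemma gaussMap_eq (hK : IsConvexBody K) (h0 : 0 ∈ interior K) (hx : x ∈ regularFrontier K) :
    gaussMap K x = NormedSpace.normalize (gradient (gauge K) x) := by
  have hex : ∃ u, IsOutwardNormalAt K x u := ⟨_, hK.isOutwardNormalAt_normalize h0 hx⟩
  rw [gaussMap, dif_pos hex]
  exact hK.eq_normalize_of_isOutwardNormalAt h0 hx hex.choose_spec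

lemma lintegral_coneMeasure (hK : IsConvexBody K) (h0 : 0 ∈ interior K) {f : Euc m → ℝ≥0∞}
    (hf : Measurable f) : ∫⁻ x, f x ∂coneMeasure K =
      ∫⁻ x in K, ‖gradient (gauge K) x‖ₑ * f (radialProj K x) := by
  have hradial := hK.measurable_radialProj h0
  rw [coneMeasure, lintegral_map hf hradial]
  exact lintegral_withDensity_eq_lintegral_mul _ measurable_gradient.enorm (hf.comp hradial)

end GaussMap

variable {n : ℕ} {K L : Set (Euc (n + 1))}

lemma coneConst_smul_surfMeasure (hK : IsConvexBody K) (h0 : 0 ∈ interior K) :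
    coneConst n • surfMeasure K =
      (coneMeasure K).map fun x ↦ NormedSpace.normalize (gradient (gauge K) x) := by
  have hexp : ((n + 1 : ℕ) : ℝ) - 1 = n := by rw [Nat.cast_succ, add_sub_cancel_right]
  rw [surfMeasure, hexp, ← hK.coneConst_smul_hausdorffMeasure_restrict h0, Measure.map_smul]
  congr 1
  exact Measure.map_congr ((hK.ae_hausdorffMeasure_mem_regularFrontier h0).mono
    fun x hx ↦ hK.gaussMap_eq h0 hx)

lemma coneConst_mul_lintegral_surfMeasure (hK : IsConvexBody K) (h0 : 0 ∈ interior K)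
    (hL : IsConvexBody L) :
    coneConst n * ∫⁻ u, ENNReal.ofReal (supportFun L u) ∂(surfMeasure K) = mixedVol K L := by
  have hnormal : Measurable fun x ↦ NormedSpace.normalize (gradient (gauge K) x) :=
    measurable_normalize_comp measurable_gradient
  have hsupport : Measurable fun u ↦ ENNReal.ofReal (supportFun L u) :=
    (continuous_supportFun hL.isCompact hL.nonempty).measurable.ennreal_ofReal
  have hcomp : Measurable fun x ↦
      ENNReal.ofReal (supportFun L (NormedSpace.normalize (gradient (gauge K) x))) :=
    hsupport.comp hnormal
  rw [← smul_eq_mul, ← lintegral_smul_measure, hK.coneConst_smul_surfMeasure h0,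
    lintegral_map hsupport hnormal, hK.lintegral_coneMeasure h0 hcomp, mixedVol]
  refine lintegral_congr_ae (ae_restrict_of_ae ?_)
  filter_upwards [hK.ae_radialProj_mem_regularFrontier h0] with x hx
  rw [gradient_gauge_radialProj hx, ← ofReal_norm,
    ← ENNReal.ofReal_mul (norm_nonneg _),
    ← supportFun_smul_right hL.isCompact hL.nonempty (norm_nonneg _),
    NormedSpace.norm_smul_normalize]

end IsConvexBody

/-! ### Blaschke sums -/

section Translation
variable {m : ℕ} (K : Set (Euc m)) (v x : Euc m)

lemma isOutwardNormalAt_vadd (u : Euc m) :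
    IsOutwardNormalAt (v +ᵥ K) (v + x) u ↔ IsOutwardNormalAt K x u := by
  have hfrontier : frontier (v +ᵥ K) = v +ᵥ frontier K :=
    ((Homeomorph.vadd v).image_frontier K).symm
  rw [IsOutwardNormalAt, IsOutwardNormalAt, hfrontier, ← vadd_eq_add v x, vadd_mem_vadd_set_iff,
    ← image_vadd, forall_mem_image]
  refine and_congr_right fun _ ↦ and_congr_right fun _ ↦ forall₂_congr fun y _ ↦ ?_
  rw [vadd_eq_add, vadd_eq_add, add_sub_add_left_eq_sub]

lemma gaussMap_vadd : gaussMap (v +ᵥ K) (v + x) = gaussMap K x := by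
  have h : IsOutwardNormalAt (v +ᵥ K) (v + x) = IsOutwardNormalAt K x :=
    funext fun u ↦ propext (isOutwardNormalAt_vadd K v x u)
  unfold gaussMap
  rw [h]

lemma surfMeasure_vadd : surfMeasure (v +ᵥ K) = surfMeasure K := by
  let e : Euc m ≃ᵢ Euc m := IsometryEquiv.addLeft v
  have he : MeasurableEmbedding e := e.toHomeomorph.measurableEmbedding
  have hfrontier : frontier (v +ᵥ K) = e '' frontier K := (e.toHomeomorph.image_frontier K).symm
  have hmap : (μH[(m : ℝ) - 1] : Measure (Euc m)).restrict (frontier (v +ᵥ K)) =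
      ((μH[(m : ℝ) - 1] : Measure (Euc m)).restrict (frontier K)).map e := by
    have h := he.restrict_map (μH[(m : ℝ) - 1] : Measure (Euc m)) (e '' frontier K)
    rwa [e.map_hausdorffMeasure, preimage_image_eq _ e.injective, ← hfrontier] at h
  have hgauss : gaussMap K = gaussMap (v +ᵥ K) ∘ e := funext fun x ↦ (gaussMap_vadd K v x).symm
  rw [surfMeasure, surfMeasure, hmap, hgauss]
  by_cases h : AEMeasurable (gaussMap (v +ᵥ K))
      (((μH[(m : ℝ) - 1] : Measure (Euc m)).restrict (frontier K)).map e)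
  · exact AEMeasurable.map_map_of_aemeasurable h he.measurable.aemeasurable
  · rw [Measure.map_of_not_aemeasurable h,
      Measure.map_of_not_aemeasurable fun h' ↦ h (he.aemeasurable_map_iff.2 h')]

end Translation

/-- `B` is a positive homothetic copy of `A`. -/
def IsHomothetic {E : Type*} [AddCommGroup E] [Module ℝ E] (A B : Set E) : Prop :=
  ∃ (c : ℝ) (v : E), 0 < c ∧ B = v +ᵥ c • A

namespace IsHomothetic
variable {E : Type*} [AddCommGroup E] [Module ℝ E] {A B C : Set E}

lemma symm (h : IsHomothetic A B) : IsHomothetic B A := by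
  obtain ⟨c, v, hc, rfl⟩ := h
  refine ⟨c⁻¹, -(c⁻¹ • v), inv_pos.2 hc, ?_⟩
  rw [smul_set_vadd, neg_vadd_vadd, inv_smul_smul₀ hc.ne']

lemma trans (hAB : IsHomothetic A B) (hBC : IsHomothetic B C) : IsHomothetic A C := by
  obtain ⟨c, v, hc, rfl⟩ := hAB
  obtain ⟨d, w, hd, rfl⟩ := hBC
  exact ⟨d * c, w + d • v, mul_pos hd hc, by rw [smul_set_vadd, smul_smul, vadd_vadd]⟩

end IsHomothetic

lemma isHomothetic_vadd_vadd_iff {E : Type*} [AddCommGroup E] [Module ℝ E] {A B : Set E} (v w : E) :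
    IsHomothetic (v +ᵥ A) (w +ᵥ B) ↔ IsHomothetic A B := by
  have htranslate (u : E) (D : Set E) : IsHomothetic D (u +ᵥ D) :=
    ⟨1, u, one_pos, by rw [one_smul]⟩
  exact ⟨fun h ↦ (htranslate v A).trans (h.trans (htranslate w B).symm),
    fun h ↦ (htranslate v A).symm.trans (h.trans (htranslate w B))⟩

namespace IsConvexBody

lemma exists_zero_mem_interior_vadd {m : ℕ} {K : Set (Euc m)} (hK : IsConvexBody K) :
    ∃ v : Euc m, (0 : Euc m) ∈ interior (v +ᵥ K) := by
  obtain ⟨x, hx⟩ := hK.interior_nonempty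
  exact ⟨-x, by rw [interior_vadd]; exact ⟨x, hx, neg_add_cancel x⟩⟩

lemma mixedVol_vadd_smul_self {n : ℕ} {K : Set (Euc (n + 1))} (hK : IsConvexBody K)
    (hK0 : 0 ∈ interior K) {c : ℝ} (hc : 0 < c) {v : Euc (n + 1)} (hv : 0 ∈ interior (v +ᵥ c • K)) :
    mixedVol (v +ᵥ c • K) K = ENNReal.ofReal (c ^ n) * volume K := by
  have hcK := hK.smul hc.ne'
  have hcK0 : 0 ∈ interior (c • K) := by
    rw [interior_smul₀ hc.ne']
    exact ⟨0, hK0, smul_zero c⟩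
  rw [← (hcK.vadd v).coneConst_mul_lintegral_surfMeasure hv hK, surfMeasure_vadd,
    hcK.coneConst_mul_lintegral_surfMeasure hcK0 hK, hK.mixedVol_smul_self hK0 hc,
    Nat.add_sub_cancel]

end IsConvexBody

/-- `M` is a Blaschke sum of the convex bodies `K` and `L`. Surface area measures do not see
translations, and the three bodies are assumed to be translated to have the origin inside. -/
structure IsBlaschkeSum {m : ℕ} (K L M : Set (Euc m)) : Prop where
  left : IsConvexBody K
  right : IsConvexBody L
  sum : IsConvexBody M
  zero_mem_left : 0 ∈ interior K
  zero_mem_right : 0 ∈ interior L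
  zero_mem_sum : 0 ∈ interior M
  surfMeasure_eq : surfMeasure M = surfMeasure K + surfMeasure L

lemma exists_isBlaschkeSum_vadd {m : ℕ} {K L M : Set (Euc m)} (hK : IsConvexBody K)
    (hL : IsConvexBody L) (hM : IsConvexBody M)
    (hS : surfMeasure M = surfMeasure K + surfMeasure L) :
    ∃ u v w : Euc m, IsBlaschkeSum (u +ᵥ K) (v +ᵥ L) (w +ᵥ M) := by
  obtain ⟨u, hu⟩ := hK.exists_zero_mem_interior_vadd
  obtain ⟨v, hv⟩ := hL.exists_zero_mem_interior_vadd
  obtain ⟨w, hw⟩ := hM.exists_zero_mem_interior_vadd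
  exact ⟨u, v, w, hK.vadd u, hL.vadd v, hM.vadd w, hu, hv, hw, by simpa only [surfMeasure_vadd]⟩

namespace IsBlaschkeSum
variable {n : ℕ} {K L M N : Set (Euc (n + 1))}

lemma mixedVol_eq (h : IsBlaschkeSum K L M) (hN : IsConvexBody N) :
    mixedVol M N = mixedVol K N + mixedVol L N := by
  rw [← h.sum.coneConst_mul_lintegral_surfMeasure h.zero_mem_sum hN,
    ← h.left.coneConst_mul_lintegral_surfMeasure h.zero_mem_left hN,
    ← h.right.coneConst_mul_lintegral_surfMeasure h.zero_mem_right hN, h.surfMeasure_eq,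
    lintegral_add_measure, mul_add]

lemma le_mixedVol_left (h : IsBlaschkeSum K L M) :
    ENNReal.ofReal (volumeRadius volume K ^ n * volumeRadius volume M) ≤ mixedVol K M :=
  h.left.le_mixedVol h.zero_mem_left h.sum (interior_subset h.zero_mem_sum)

lemma le_mixedVol_right (h : IsBlaschkeSum K L M) :
    ENNReal.ofReal (volumeRadius volume L ^ n * volumeRadius volume M) ≤ mixedVol L M :=
  h.right.le_mixedVol h.zero_mem_right h.sum (interior_subset h.zero_mem_sum)

lemma mixedVol_left_add_mixedVol_right (h : IsBlaschkeSum K L M) :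
    mixedVol K M + mixedVol L M = ENNReal.ofReal (volumeRadius volume M ^ (n + 1)) := by
  rw [← h.mixedVol_eq h.sum, h.sum.mixedVol_self h.zero_mem_sum, h.sum.ofReal_volumeRadius_pow]

lemma volumeRadius_pow_add_le (h : IsBlaschkeSum K L M) :
    volumeRadius volume K ^ n + volumeRadius volume L ^ n ≤ volumeRadius volume M ^ n := by
  have hrK := h.left.volumeRadius_pos
  have hrL := h.right.volumeRadius_pos
  have hrM := h.sum.volumeRadius_pos
  refine le_of_mul_le_mul_right ?_ hrM
  rw [← pow_succ, add_mul, ← ENNReal.ofReal_le_ofReal_iff (by positivity),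
    ENNReal.ofReal_add (by positivity) (by positivity), ← h.mixedVol_left_add_mixedVol_right]
  exact add_le_add h.le_mixedVol_left h.le_mixedVol_right

lemma isHomothetic_of_volumeRadius_pow_le (h : IsBlaschkeSum K L M)
    (hle : volumeRadius volume M ^ n ≤ volumeRadius volume K ^ n + volumeRadius volume L ^ n) :
    IsHomothetic K L := by
  have hrK := h.left.volumeRadius_pos
  have hrL := h.right.volumeRadius_pos
  have hrM := h.sum.volumeRadius_pos
  have hsum : mixedVol K M + mixedVol L M ≤
      ENNReal.ofReal (volumeRadius volume K ^ n * volumeRadius volume M) +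
        ENNReal.ofReal (volumeRadius volume L ^ n * volumeRadius volume M) := by
    rw [h.mixedVol_left_add_mixedVol_right, ← ENNReal.ofReal_add (by positivity) (by positivity),
      ← add_mul, pow_succ]
    gcongr
  have hK : mixedVol K M ≤ ENNReal.ofReal (volumeRadius volume K ^ n * volumeRadius volume M) :=
    (ENNReal.add_le_add_iff_right ENNReal.ofReal_ne_top).1
      ((add_le_add_right h.le_mixedVol_right _).trans hsum)
  have hL : mixedVol L M ≤ ENNReal.ofReal (volumeRadius volume L ^ n * volumeRadius volume M) :=
    (ENNReal.add_le_add_iff_left ENNReal.ofReal_ne_top).1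
      ((add_le_add_left h.le_mixedVol_left _).trans hsum)
  have hKM : IsHomothetic K M := h.left.exists_eq_vadd_smul_of_mixedVol_le h.zero_mem_left h.sum
    (interior_subset h.zero_mem_sum) hK
  have hLM : IsHomothetic L M := h.right.exists_eq_vadd_smul_of_mixedVol_le h.zero_mem_right h.sum
    (interior_subset h.zero_mem_sum) hL
  exact hKM.trans hLM.symm

lemma volumeRadius_pow_le_of_isHomothetic (h : IsBlaschkeSum K L M) (hKL : IsHomothetic K L) :
    volumeRadius volume M ^ n ≤ volumeRadius volume K ^ n + volumeRadius volume L ^ n := by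
  have hrK := h.left.volumeRadius_pos
  obtain ⟨c, v, hc, rfl⟩ := hKL
  have hle := h.sum.le_mixedVol h.zero_mem_sum h.left (interior_subset h.zero_mem_left)
  rw [h.mixedVol_eq h.left, h.left.mixedVol_self h.zero_mem_left,
    h.left.mixedVol_vadd_smul_self h.zero_mem_left hc h.zero_mem_right,
    ← h.left.ofReal_volumeRadius_pow, ← ENNReal.ofReal_mul (by positivity),
    ← ENNReal.ofReal_add (by positivity) (by positivity),
    ENNReal.ofReal_le_ofReal_iff (by positivity)] at hle
  refine le_of_mul_le_mul_right (hle.trans_eq ?_) hrK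
  rw [volumeRadius_vadd, volumeRadius_smul volume hc.le]
  ring

end IsBlaschkeSum

lemma volume_rpow {n : ℕ} (K : Set (Euc (n + 1))) :
    (volume K).toReal ^ ((((n + 1 : ℕ) : ℝ) - 1) / (n + 1 : ℕ)) = volumeRadius volume K ^ n := by
  rw [volumeRadius, finrank_euclideanSpace_fin, ← Real.rpow_natCast,
    ← Real.rpow_mul measureReal_nonneg, measureReal_def, Nat.cast_succ, add_sub_cancel_right,
    mul_comm, div_eq_mul_inv]

/-- the Kneser–Süss inequality for the Blaschke sum, with equality
iff the bodies are homothetic. -/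
theorem kneser_suss {m : ℕ} (hm : 2 ≤ m) (K L M : Set (Euc m))
    (hK : IsConvexBody K) (hL : IsConvexBody L) (hM : IsConvexBody M)
    (hS : ∀ U : Set (Euc m), MeasurableSet U →
      surfMeasure M U = surfMeasure K U + surfMeasure L U) :
    (volume M).toReal ^ (((m:ℝ) - 1) / m) ≥
      (volume K).toReal ^ (((m:ℝ) - 1) / m) + (volume L).toReal ^ (((m:ℝ) - 1) / m) ∧
    ((volume M).toReal ^ (((m:ℝ) - 1) / m) =
      (volume K).toReal ^ (((m:ℝ) - 1) / m) + (volume L).toReal ^ (((m:ℝ) - 1) / m) ↔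
      ∃ (c : ℝ) (v : Euc m), 0 < c ∧ L = v +ᵥ c • K) := by
  obtain ⟨n, rfl⟩ : ∃ n, m = n + 1 := ⟨m - 1, by lia⟩
  obtain ⟨u, v, w, h⟩ := exists_isBlaschkeSum_vadd hK hL hM (Measure.ext fun U hU ↦ by
    rw [hS U hU, Measure.add_apply])
  have hle := h.volumeRadius_pow_add_le
  have hrev : volumeRadius volume (w +ᵥ M) ^ n ≤
      volumeRadius volume (u +ᵥ K) ^ n + volumeRadius volume (v +ᵥ L) ^ n ↔ IsHomothetic K L := by
    rw [← isHomothetic_vadd_vadd_iff u v]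
    exact ⟨h.isHomothetic_of_volumeRadius_pow_le, h.volumeRadius_pow_le_of_isHomothetic⟩
  simp only [volumeRadius_vadd] at hle hrev
  simp only [volume_rpow]
  exact ⟨hle, hle.ge_iff_eq'.symm.trans hrev⟩
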